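/- arXiv:2210.06214 — 3 statements merged into one kernel-verified Lean document; each statement's English description precedes it below -/
import Mathlib

section
/- There exists an RDSQS*(28). -/
open Finset

/-- A parallel class on point set `Y`: a collection of blocks that partitions `Y`. -/
def IsParallelClass (Y : Finset ℕ) (P : Finset (Finset ℕ)) : Prop :=
  (∀ b ∈ P, b ⊆ Y) ∧ ∀ y ∈ Y, ∃! b, b ∈ P ∧ y ∈ b

/-- A block collection `B` on point set `Y` is resolvable if it can be partitioned
into parallel classes of `Y`. -/
def Resolvable (Y : Finset ℕ) (B : Finset (Finset ℕ)) : Prop :=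
  ∃ (r : ℕ) (P : Fin r → Finset (Finset ℕ)),
    (∀ i, IsParallelClass Y (P i)) ∧ (∀ i, P i ⊆ B) ∧ ∀ b ∈ B, ∃! i, b ∈ P i

/-- The blocks of the derived design at a point `x`:
`{B \ {x} : x ∈ B, B ∈ B}`. -/
def derivedBlocks (B : Finset (Finset ℕ)) (x : ℕ) : Finset (Finset ℕ) :=
  (B.filter fun b => x ∈ b).image fun b => b.erase x

/-- A Steiner system S(t, k, v) on point set `X` with block collection `B`. -/
def IsSteiner (t k v : ℕ) (X : Finset ℕ) (B : Finset (Finset ℕ)) : Prop :=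
  X.card = v ∧ (∀ b ∈ B, b ⊆ X ∧ b.card = k) ∧
  ∀ T ⊆ X, T.card = t → ∃! b, b ∈ B ∧ T ⊆ b

/-- An RDS(t, k, v): a Steiner system S(t, k, v) whose derived design at every
point is resolvable. -/
def IsRDS (t k v : ℕ) (X : Finset ℕ) (B : Finset (Finset ℕ)) : Prop :=
  IsSteiner t k v X B ∧ ∀ x ∈ X, Resolvable (X.erase x) (derivedBlocks B x)

/-- Existence of an RDS(t, k, v). -/
def ExistsRDS (t k v : ℕ) : Prop := ∃ X B, IsRDS t k v X B

/-- Existence of an RDSQS(v), i.e. an RDS(3, 4, v). -/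
def ExistsRDSQS (v : ℕ) : Prop := ExistsRDS 3 4 v

/-- A Kirkman triple system KTS(v): a resolvable Steiner triple system. -/
def IsKTS (v : ℕ) (X : Finset ℕ) (B : Finset (Finset ℕ)) : Prop :=
  IsSteiner 2 3 v X B ∧ Resolvable X B

/-- Existence of a large set of Kirkman triple systems LKTS(v): a partition of
all 3-element subsets of a v-element set into v - 2 classes, each a KTS(v). -/
def ExistsLKTS (v : ℕ) : Prop :=
  ∃ (X : Finset ℕ) (C : Fin (v - 2) → Finset (Finset ℕ)),
    X.card = v ∧ (∀ i, IsKTS v X (C i)) ∧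
    (∀ T : Finset ℕ, (T ⊆ X ∧ T.card = 3) ↔ ∃ i, T ∈ C i) ∧
    ∀ (T : Finset ℕ) (i j : Fin (v - 2)), T ∈ C i → T ∈ C j → i = j

/-- A t-wise balanced design S(t, K, v) with block sizes from the set `K`. -/
def IsTBD (t : ℕ) (K : Set ℕ) (v : ℕ) (X : Finset ℕ) (B : Finset (Finset ℕ)) : Prop :=
  X.card = v ∧ (∀ b ∈ B, b ⊆ X ∧ b.card ∈ K) ∧
  ∀ T ⊆ X, T.card = t → ∃! b, b ∈ B ∧ T ⊆ b

/-- A group divisible design GDD(t, K, g*n) of type g^n: `Gs` is a partition of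
`X` into `n` groups of size `g`; blocks have sizes in `K`, meet every group in
at most one point, and every t-subset of `X` meeting every group in at most one
point lies in exactly one block. -/
def IsGDD (t : ℕ) (K : Set ℕ) (g n : ℕ) (X : Finset ℕ)
    (Gs Bs : Finset (Finset ℕ)) : Prop :=
  X.card = g * n ∧ Gs.card = n ∧
  (∀ G ∈ Gs, G ⊆ X ∧ G.card = g) ∧
  (∀ x ∈ X, ∃! G, G ∈ Gs ∧ x ∈ G) ∧
  (∀ b ∈ Bs, b ⊆ X ∧ b.card ∈ K) ∧
  (∀ b ∈ Bs, ∀ G ∈ Gs, (b ∩ G).card ≤ 1) ∧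
  ∀ T ⊆ X, T.card = t → (∀ G ∈ Gs, (T ∩ G).card ≤ 1) → ∃! b, b ∈ Bs ∧ T ⊆ b

/-- An RDGDD(t, K, g*n) of type g^n: a GDD whose derived design at every point
(on point set `X \ G`, where `G` is the group of the point) is resolvable. -/
def IsRDGDD (t : ℕ) (K : Set ℕ) (g n : ℕ) (X : Finset ℕ)
    (Gs Bs : Finset (Finset ℕ)) : Prop :=
  IsGDD t K g n X Gs Bs ∧
  ∀ x ∈ X, ∀ G ∈ Gs, x ∈ G → Resolvable (X \ G) (derivedBlocks Bs x)

/-- An RDSQS*(v): an SQS(v) with v ≡ 1 (mod 3) such that, for every point `x`,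
the derived blocks at `x` contain a parallel class `P'` (enumerated by `Bk`);
the multiset consisting of each triple of `P'` three times and each remaining
derived triple twice can be partitioned into (v-1) parallel classes
`P k l` (k ranging over Fin ((v-1)/3), l over Fin 3); and for each `k` the three
parallel classes `P k l` share the common triple `Bk k`. -/
def IsRDSQSstar (v : ℕ) (X : Finset ℕ) (B : Finset (Finset ℕ)) : Prop :=
  IsSteiner 3 4 v X B ∧ v % 3 = 1 ∧
  ∀ x ∈ X, ∃ (P' : Finset (Finset ℕ)) (Bk : Fin ((v - 1) / 3) → Finset ℕ)
    (P : Fin ((v - 1) / 3) → Fin 3 → Finset (Finset ℕ)),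
    P' ⊆ derivedBlocks B x ∧
    IsParallelClass (X.erase x) P' ∧
    (∀ k, Bk k ∈ P') ∧
    (∀ b ∈ P', ∃ k, Bk k = b) ∧
    Function.Injective Bk ∧
    (∀ k l, IsParallelClass (X.erase x) (P k l)) ∧
    ((∑ k, ∑ l, (P k l).val) =
        3 • P'.val + 2 • ((derivedBlocks B x) \ P').val) ∧
    ∀ k l, Bk k ∈ P k l

/-!
In characteristic three the value `-1` of the cross-ratio is invariant under all permutations of the
four points, so the harmonic quadruples form a Steiner quadruple system on the projective line over
a finite field `F` of characteristic three, with `PGL(2, F)` acting transitively on the points. The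
derived design at `∞` consists of the triples of `F` with sum zero, which are the lines of the
affine space `F` over `𝔽₃`. It is therefore enough to find, for `|F| = 27`, one star resolution of
the lines of `AG(3, 3)`.

Identify `AG(3, 3)` with `𝔽₉ × 𝔽₃` by the coordinates `(w, t - N w)`. The lines are then permuted by
the translations of `(w, t)` and by the maps `(w, t) ↦ (u w, N u t)` with `u ∈ 𝔽₉ˣ`. The vertical
line through the origin together with one orbit of lines under `𝔽₉ˣ` is a parallel class, and its 27
translates are the classes of the resolution: `P w l` is the translate by `(w, l)`, and the vertical
line above `w` lies in exactly `P w 0`, `P w 1` and `P w 2`. Every other line lies in exactly two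
translates, because every non-vertical difference occurs exactly twice inside the parallel class.
-/

section Resolutions

variable {α β ι κ : Type*}

/-- A parallel class of blocks on a point set `Y` in an arbitrary type; for `α = ℕ` this is
`IsParallelClass`. -/
def IsParallelClassOn (Y : Finset α) (P : Finset (Finset α)) : Prop :=
  (∀ b ∈ P, b ⊆ Y) ∧ ∀ y ∈ Y, ∃! b, b ∈ P ∧ y ∈ b

theorem isParallelClassOn_univ_iff [Fintype α] [DecidableEq α] {P : Finset (Finset α)} :
    IsParallelClassOn univ P ↔ ∀ y, #{b ∈ P | y ∈ b} = 1 := by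
  simp only [IsParallelClassOn, subset_univ, implies_true, true_and, mem_univ, forall_const,
    card_eq_one_iff_existsUnique, mem_filter]

theorem IsParallelClassOn.image [DecidableEq β] {f : α → β} (hf : f.Injective) {Y : Finset α}
    {P : Finset (Finset α)} (hP : IsParallelClassOn Y P) :
    IsParallelClassOn (Y.image f) (P.image (Finset.image f)) := by
  refine ⟨forall_mem_image.2 fun b hb ↦ image_subset_image (hP.1 b hb),
    forall_mem_image.2 fun y hy ↦ ?_⟩
  obtain ⟨b, ⟨hb, hyb⟩, b_unique⟩ := hP.2 y hy
  refine ⟨b.image f, ⟨mem_image_of_mem _ hb, mem_image_of_mem f hyb⟩, ?_⟩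
  rintro _ ⟨c_mem, hyc⟩
  obtain ⟨c, hc, rfl⟩ := mem_image.1 c_mem
  rw [b_unique c ⟨hc, (hf.mem_finset_image).1 hyc⟩]

/-- The resolution that the definition of an RDSQS* asks of each derived design `D`, on a point set
`Y` in an arbitrary type: the triples `b k` are those of the distinguished parallel class, and the
partition of the multiset `M` into the classes `P k l` is expressed by counting, for each triple of
`D`, the classes containing it. -/
structure IsStarResolution [Fintype ι] [DecidableEq α] (Y : Finset α) (D : Finset (Finset α))
    (b : ι → Finset α) (P : ι → Fin 3 → Finset (Finset α)) : Prop where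
  injective : b.Injective
  isParallelClassOn_image : IsParallelClassOn Y (univ.image b)
  isParallelClassOn (k l) : IsParallelClassOn Y (P k l)
  subset (k l) : P k l ⊆ D
  mem (k l) : b k ∈ P k l
  card_filter_mem : ∀ T ∈ D, #{i : ι × Fin 3 | T ∈ P i.1 i.2} = if T ∈ univ.image b then 3 else 2

namespace IsStarResolution

variable [Fintype ι] [DecidableEq α] {Y : Finset α} {D : Finset (Finset α)}
  {b : ι → Finset α} {P : ι → Fin 3 → Finset (Finset α)}

theorem image [DecidableEq β] (h : IsStarResolution Y D b P) {f : α → β} (hf : f.Injective) :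
    IsStarResolution (Y.image f) (D.image (Finset.image f)) (fun k ↦ (b k).image f)
      (fun k l ↦ (P k l).image (Finset.image f)) where
  injective := (image_injective hf).comp h.injective
  isParallelClassOn_image := by
    simpa only [image_image, Function.comp_def] using h.isParallelClassOn_image.image hf
  isParallelClassOn k l := (h.isParallelClassOn k l).image hf
  subset k l := image_subset_image (h.subset k l)
  mem k l := mem_image_of_mem _ (h.mem k l)
  card_filter_mem := forall_mem_image.2 fun T hT ↦ by
    rw [← Function.comp_def (Finset.image f) b, ← image_image]
    simp only [(image_injective hf).mem_finset_image, h.card_filter_mem T hT]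

theorem reindex [Fintype κ] (h : IsStarResolution Y D b P) (e : κ ≃ ι) :
    IsStarResolution Y D (b ∘ e) (P ∘ e) where
  injective := h.injective.comp e.injective
  isParallelClassOn_image := by
    classical
    rw [← image_image, image_univ_equiv]
    exact h.isParallelClassOn_image
  isParallelClassOn k := h.isParallelClassOn (e k)
  subset k := h.subset (e k)
  mem k := h.mem (e k)
  card_filter_mem T hT := by
    classical
    rw [← image_image, image_univ_equiv, ← h.card_filter_mem T hT]
    exact card_equiv (e.prodCongr (Equiv.refl _)) (by simp)

theorem image_subset (h : IsStarResolution Y D b P) : univ.image b ⊆ D :=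
  image_subset_iff.2 fun k _ ↦ h.subset k 0 (h.mem k 0)

theorem sum_val (h : IsStarResolution Y D b P) :
    ∑ k, ∑ l, (P k l).val = 3 • (univ.image b).val + 2 • (D \ univ.image b).val := by
  ext T
  have count_sum : (∑ k, ∑ l, (P k l).val).count T = #{i : ι × Fin 3 | T ∈ P i.1 i.2} := by
    simp only [Multiset.count_sum', Multiset.count_eq_of_nodup (nodup _), mem_val, card_filter,
      Fintype.sum_prod_type]
  rw [count_sum]
  simp only [Multiset.count_add, Multiset.count_nsmul, Multiset.count_eq_of_nodup (nodup _),
    mem_val, mem_sdiff]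
  by_cases hT : T ∈ D
  · rw [h.card_filter_mem T hT]
    by_cases hTb : T ∈ univ.image b <;> simp only [hT, hTb] <;> simp
  · have hTb : T ∉ univ.image b := fun hTb ↦ hT (h.image_subset hTb)
    simp only [hT, hTb, fun k l ↦ mt (@h.subset k l T) hT]
    simp

end IsStarResolution

end Resolutions

section Designs

variable {α β : Type*}

/-- A Steiner system `S(t, k, |α|)` whose point set is the whole type `α`. -/
def IsSteinerOn (t k : ℕ) (B : Finset (Finset α)) : Prop :=
  (∀ b ∈ B, #b = k) ∧ ∀ T : Finset α, #T = t → ∃! b, b ∈ B ∧ T ⊆ b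

theorem IsSteinerOn.isSteiner_image [Fintype α] {t k : ℕ} {B : Finset (Finset α)}
    (hB : IsSteinerOn t k B) {f : α → ℕ} (hf : f.Injective) :
    IsSteiner t k (Fintype.card α) (univ.image f) (B.image (Finset.image f)) := by
  refine ⟨card_image_of_injective _ hf, forall_mem_image.2 fun b hb ↦
    ⟨image_subset_image (subset_univ b), (card_image_of_injective _ hf).trans (hB.1 b hb)⟩, ?_⟩
  intro T hT hTt
  obtain ⟨T, -, rfl⟩ := subset_image_iff.1 hT
  rw [card_image_of_injective _ hf] at hTt
  obtain ⟨b, ⟨hb, hTb⟩, b_unique⟩ := hB.2 T hTt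
  refine ⟨b.image f, ⟨mem_image_of_mem _ hb, image_subset_image hTb⟩, ?_⟩
  rintro _ ⟨c_mem, hTc⟩
  obtain ⟨c, hc, rfl⟩ := mem_image.1 c_mem
  rw [b_unique c ⟨hc, (image_subset_image_iff hf).1 hTc⟩]

/-- The blocks of the derived design at `x`, in an arbitrary type; for `α = ℕ` this is
`derivedBlocks`. -/
def derivedBlocksAt [DecidableEq α] (B : Finset (Finset α)) (x : α) : Finset (Finset α) :=
  {b ∈ B | x ∈ b}.image fun b ↦ b.erase x

theorem derivedBlocksAt_image [DecidableEq α] [DecidableEq β] {f : α → β} (hf : f.Injective)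
    (B : Finset (Finset α)) (x : α) :
    derivedBlocksAt (B.image (Finset.image f)) (f x) =
      (derivedBlocksAt B x).image (Finset.image f) := by
  simp only [derivedBlocksAt, filter_image, hf.mem_finset_image, image_image]
  exact image_congr fun b _ ↦ (image_erase hf b x).symm

theorem IsSteinerOn.isRDSQSstar_image [Fintype α] [DecidableEq α] {B : Finset (Finset α)}
    (hB : IsSteinerOn 3 4 B) (card_mod : Fintype.card α % 3 = 1)
    (resolution : ∀ x, ∃ (b : Fin ((Fintype.card α - 1) / 3) → Finset α) (P : _),
      IsStarResolution (univ.erase x) (derivedBlocksAt B x) b P)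
    {f : α → ℕ} (hf : f.Injective) :
    IsRDSQSstar (Fintype.card α) (univ.image f) (B.image (Finset.image f)) := by
  refine ⟨hB.isSteiner_image hf, card_mod, forall_mem_image.2 fun x _ ↦ ?_⟩
  obtain ⟨b, P, hbP⟩ := resolution x
  have h := hbP.image hf
  rw [← derivedBlocksAt_image hf, image_erase hf] at h
  exact ⟨_, _, _, h.image_subset, h.isParallelClassOn_image,
    fun k ↦ mem_image_of_mem _ (mem_univ k), fun T hT ↦ by simpa using hT,
    h.injective, h.isParallelClassOn, h.sum_val, h.mem⟩

end Designs

section ZeroSumTriples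

variable {α β A A' : Type*} [Fintype α] [AddCommGroup A] [DecidableEq A]

/-- The triples of points of `α` whose labels under `φ : α → A` sum to zero. If `φ` is a bijection
onto a group of exponent three, these are the lines of an affine space over the field with three
elements. -/
def zeroSumTriples (φ : α → A) : Finset (Finset α) := {T | #T = 3 ∧ ∑ v ∈ T, φ v = 0}

theorem mem_zeroSumTriples {φ : α → A} {T : Finset α} :
    T ∈ zeroSumTriples φ ↔ #T = 3 ∧ ∑ v ∈ T, φ v = 0 :=
  mem_filter_univ T

theorem eq_of_mem_zeroSumTriples {φ : α → A} (hφ : φ.Injective) {S T : Finset α}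
    (hS : S ∈ zeroSumTriples φ) (hT : T ∈ zeroSumTriples φ) {a b : α} (hab : a ≠ b)
    (haS : a ∈ S) (hbS : b ∈ S) (haT : a ∈ T) (hbT : b ∈ T) : S = T := by
  classical
  have eq_insert {U : Finset α} (hU : U ∈ zeroSumTriples φ) (ha : a ∈ U) (hb : b ∈ U) :
      ∃ c, φ c = -(φ a + φ b) ∧ U = {c, a, b} := by
    obtain ⟨card_eq, sum_eq⟩ := mem_zeroSumTriples.1 hU
    obtain ⟨c, hc, rfl⟩ := exists_eq_insert_iff.2
      ⟨insert_subset ha (singleton_subset_iff.2 hb), by rw [card_pair hab, card_eq]⟩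
    rw [sum_insert hc, sum_pair hab] at sum_eq
    exact ⟨c, eq_neg_of_add_eq_zero_left sum_eq, rfl⟩
  obtain ⟨c, hc, rfl⟩ := eq_insert hS haS hbS
  obtain ⟨d, hd, rfl⟩ := eq_insert hT haT hbT
  rw [hφ (hc.trans hd.symm)]

theorem zeroSumTriples_comp [AddCommGroup A'] [DecidableEq A'] {f : A →+ A'}
    (hf : Function.Injective f) (φ : α → A) : zeroSumTriples (f ∘ φ) = zeroSumTriples φ := by
  ext T
  simp only [mem_zeroSumTriples, Function.comp_apply, ← map_sum, map_eq_zero_iff f hf]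

theorem image_mem_zeroSumTriples [Fintype β] [DecidableEq β] {f : α → β} (hf : f.Injective)
    {φ : β → A} {T : Finset α} : T.image f ∈ zeroSumTriples φ ↔ T ∈ zeroSumTriples (φ ∘ f) := by
  rw [mem_zeroSumTriples, mem_zeroSumTriples, card_image_of_injective _ hf,
    sum_image hf.injOn, Function.comp_def]

theorem image_zeroSumTriples [Fintype β] [DecidableEq β] (e : α ≃ β) (φ : β → A) :
    (zeroSumTriples (φ ∘ e)).image (Finset.image e) = zeroSumTriples φ := by
  ext T
  rw [mem_image]
  constructor
  · rintro ⟨S, hS, rfl⟩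
    exact (image_mem_zeroSumTriples e.injective).2 hS
  · intro hT
    obtain ⟨S, -, rfl⟩ := subset_image_iff.1
      ((subset_univ T).trans (image_univ_of_surjective e.surjective).superset)
    exact ⟨S, (image_mem_zeroSumTriples e.injective).1 hT, rfl⟩

end ZeroSumTriples

section HarmonicQuadruples

open Polynomial

open scoped OnePoint MatrixGroups

theorem univ_erase_infty {α : Type*} [Fintype α] [DecidableEq (OnePoint α)] :
    univ.erase ∞ = univ.image ((↑) : α → OnePoint α) := by
  ext p
  induction p using OnePoint.rec <;> simp

variable {F : Type*} [Field F]

/-- The first homogeneous coordinate of a point of the projective line, normalised by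
`∞ = (1 : 0)` and `a = (a : 1)`. -/
def projNum (p : OnePoint F) : F := p.elim 1 id

/-- The second homogeneous coordinate of a point of the projective line, normalised by
`∞ = (1 : 0)` and `a = (a : 1)`. -/
def projDen (p : OnePoint F) : F := p.elim 0 fun _ ↦ 1

@[simp] theorem projNum_infty : projNum (∞ : OnePoint F) = 1 := rfl

@[simp] theorem projNum_coe (a : F) : projNum (a : OnePoint F) = a := rfl

@[simp] theorem projDen_infty : projDen (∞ : OnePoint F) = 0 := rfl

@[simp] theorem projDen_coe (a : F) : projDen (a : OnePoint F) = 1 := rfl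

/-- The classical bracket of two points of the projective line: the determinant of their
homogeneous coordinates. -/
def bracket (p q : OnePoint F) : F := projNum p * projDen q - projNum q * projDen p

theorem bracket_self (p : OnePoint F) : bracket p p = 0 := sub_self _

theorem bracket_ne_zero {p q : OnePoint F} (h : p ≠ q) : bracket p q ≠ 0 := by
  induction p using OnePoint.rec <;> induction q using OnePoint.rec <;>
    simp_all [bracket, sub_eq_zero]

theorem existsUnique_mul_projDen_eq {x y : F} (h : x ≠ 0 ∨ y ≠ 0) :
    ∃! t : OnePoint F, x * projDen t = y * projNum t := by
  by_cases hy : y = 0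
  · have hx : x ≠ 0 := h.resolve_right (not_not_intro hy)
    refine ⟨∞, by simp [hy], fun t ht ↦ ?_⟩
    induction t using OnePoint.rec <;> simp_all
  · refine ⟨(x / y : F), by simp [mul_div_cancel₀, hy], fun t ht ↦ ?_⟩
    induction t using OnePoint.rec with
    | infty => simp_all
    | coe a => exact congrArg _ (eq_div_of_mul_eq hy (by simpa [mul_comm] using ht.symm))

theorem exists_homogeneous_smul [DecidableEq F] (g : GL (Fin 2) F) (p : OnePoint F) :
    ∃ c : F, c ≠ 0 ∧ c * projNum (g • p) = g 0 0 * projNum p + g 0 1 * projDen p ∧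
      c * projDen (g • p) = g 1 0 * projNum p + g 1 1 * projDen p := by
  have det_ne_zero : g 0 0 * g 1 1 - g 0 1 * g 1 0 ≠ 0 := by
    simpa only [Matrix.det_fin_two] using g.det_ne_zero
  induction p using OnePoint.rec with
  | infty =>
    rw [OnePoint.smul_infty_eq_ite]
    split_ifs with h
    · exact ⟨g 0 0, by rintro h'; simp [h, h'] at det_ne_zero, by simp [h]⟩
    · exact ⟨g 1 0, h, by simp [mul_div_cancel₀, h]⟩
  | coe a =>
    rw [OnePoint.smul_some_eq_ite]
    split_ifs with h
    · refine ⟨g 0 0 * a + g 0 1, fun h' ↦ det_ne_zero ?_, by simp [h]⟩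
      linear_combination g 0 0 * h - g 1 0 * h'
    · exact ⟨g 1 0 * a + g 1 1, h, by simp [mul_div_cancel₀, h]⟩

theorem exists_bracket_smul [DecidableEq F] (g : GL (Fin 2) F) :
    ∃ c : OnePoint F → F, (∀ p, c p ≠ 0) ∧
      ∀ p q, g.det * bracket p q = c p * c q * bracket (g • p) (g • q) := by
  choose c c_ne_zero hnum hden using exists_homogeneous_smul g
  refine ⟨c, c_ne_zero, fun p q ↦ ?_⟩
  rw [Matrix.GeneralLinearGroup.val_det_apply, Matrix.det_fin_two]
  simp only [bracket]
  calc _ = (g 0 0 * projNum p + g 0 1 * projDen p) * (g 1 0 * projNum q + g 1 1 * projDen q) -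
        (g 0 0 * projNum q + g 0 1 * projDen q) * (g 1 0 * projNum p + g 1 1 * projDen p) := by
        ring
    _ = _ := by rw [← hnum, ← hden, ← hnum, ← hden]; ring

/-- The linear polynomial whose homogenisation vanishes at the point `p`; it is a constant for
`p = ∞`. -/
noncomputable def linearFactor (p : OnePoint F) : F[X] := C (projDen p) * X - C (projNum p)

theorem coeff_zero_linearFactor_mul (p : OnePoint F) (f : F[X]) :
    (linearFactor p * f).coeff 0 = -(projNum p * f.coeff 0) := by
  simp [linearFactor, mul_coeff_zero]

theorem coeff_succ_linearFactor_mul (p : OnePoint F) (f : F[X]) (n : ℕ) :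
    (linearFactor p * f).coeff (n + 1) = projDen p * f.coeff n - projNum p * f.coeff (n + 1) := by
  simp [linearFactor, sub_mul, mul_assoc, coeff_X_mul]

/-- For distinct points this vanishes exactly when the cross-ratio of `p`, `q`, `r`, `t` is `-1`,
i.e. when the pairs `{p, q}` and `{r, t}` separate each other harmonically. -/
def harmonicForm (p q r t : OnePoint F) : F :=
  bracket p r * bracket q t + bracket p t * bracket q r

theorem coeff_two_prod_linearFactor [CharP F 3] (p q r t : OnePoint F) :
    (linearFactor p * (linearFactor q * (linearFactor r * linearFactor t))).coeff 2 =
      -harmonicForm p q r t := by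
  have three_eq_zero : (3 : F) = 0 := by exact_mod_cast CharP.cast_eq_zero F 3
  rw [← mul_one (linearFactor t)]
  simp only [coeff_zero_linearFactor_mul, coeff_succ_linearFactor_mul, coeff_one,
    harmonicForm, bracket, ↓reduceIte, one_ne_zero, OfNat.ofNat_ne_zero, Nat.reduceAdd, zero_add]
  linear_combination (projNum p * projNum q * projDen r * projDen t +
    projNum r * projNum t * projDen p * projDen q) * three_eq_zero

theorem harmonicForm_ne_zero_of_mem [CharP F 3] [DecidableEq (OnePoint F)] {p q r t : OnePoint F}
    (hpq : p ≠ q) (hpr : p ≠ r) (hqr : q ≠ r) (ht : t ∈ ({p, q, r} : Finset (OnePoint F))) :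
    harmonicForm t p q r ≠ 0 := by
  have two_ne_zero : (2 : F) ≠ 0 := by
    exact_mod_cast CharP.cast_ne_zero_of_ne_of_prime F Nat.prime_two (by norm_num : 3 ≠ 2)
  simp only [mem_insert, mem_singleton] at ht
  rcases ht with rfl | rfl | rfl
  · rw [harmonicForm, mul_comm, ← two_mul]
    exact mul_ne_zero two_ne_zero (mul_ne_zero (bracket_ne_zero hpr) (bracket_ne_zero hpq))
  · rw [harmonicForm, bracket_self, zero_mul, zero_add]
    exact mul_ne_zero (bracket_ne_zero hqr) (bracket_ne_zero hpq)
  · rw [harmonicForm, bracket_self, zero_mul, add_zero]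
    exact mul_ne_zero (bracket_ne_zero hqr.symm) (bracket_ne_zero hpr)

theorem existsUnique_harmonicForm_eq_zero [CharP F 3] {p q r : OnePoint F} (hpq : p ≠ q)
    (hpr : p ≠ r) (hqr : q ≠ r) : ∃! t, harmonicForm t p q r = 0 := by
  set x := projNum q * bracket p r + projNum r * bracket p q with hx
  set y := projDen q * bracket p r + projDen r * bracket p q with hy
  have harmonicForm_eq (t) : harmonicForm t p q r = y * projNum t - x * projDen t := by
    simp only [harmonicForm, bracket, hx, hy]
    ring
  have xy_ne_zero : x ≠ 0 ∨ y ≠ 0 := by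
    classical
    by_contra! h
    apply harmonicForm_ne_zero_of_mem hpq hpr hqr (mem_insert_self p _)
    rw [harmonicForm_eq, h.1, h.2, zero_mul, zero_mul, sub_zero]
  simpa only [harmonicForm_eq, sub_eq_zero, eq_comm] using existsUnique_mul_projDen_eq xy_ne_zero

theorem harmonicForm_infty [CharP F 3] (a b c : F) :
    harmonicForm (∞ : OnePoint F) a b c = -(a + b + c) := by
  have three_eq_zero : (3 : F) = 0 := by exact_mod_cast CharP.cast_eq_zero F 3
  simp only [harmonicForm, bracket, projNum_infty, projDen_infty, projNum_coe, projDen_coe]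
  linear_combination a * three_eq_zero

theorem harmonicForm_smul_eq_zero_iff [DecidableEq F] (g : GL (Fin 2) F) (p q r t : OnePoint F) :
    harmonicForm (g • p) (g • q) (g • r) (g • t) = 0 ↔ harmonicForm p q r t = 0 := by
  obtain ⟨c, c_ne_zero, hc⟩ := exists_bracket_smul g
  have prod_mul_harmonicForm :
      c p * c q * c r * c t * harmonicForm (g • p) (g • q) (g • r) (g • t) =
        (g.det : F) ^ 2 * harmonicForm p q r t := by
    simp only [harmonicForm]
    calc _ = (c p * c r * bracket (g • p) (g • r)) * (c q * c t * bracket (g • q) (g • t)) +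
          (c p * c t * bracket (g • p) (g • t)) * (c q * c r * bracket (g • q) (g • r)) := by ring
      _ = _ := by
        simp only [← hc]
        ring
  have prod_ne_zero : c p * c q * c r * c t ≠ 0 := by simp [c_ne_zero]
  have det_sq_ne_zero : (g.det : F) ^ 2 ≠ 0 := pow_ne_zero 2 g.det.ne_zero
  rw [← mul_eq_zero_iff_left prod_ne_zero, prod_mul_harmonicForm,
    mul_eq_zero_iff_left det_sq_ne_zero]

section Quadruples

variable [Fintype F] [DecidableEq F]

variable (F) in
/-- The quadruples of points whose binary quartic has no `x ^ 2 * y ^ 2` term. In characteristic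
three these are the quadruples with cross-ratio `-1`; the quartic makes the definition manifestly
independent of the order of the points. -/
noncomputable def harmonicQuadruples : Finset (Finset (OnePoint F)) :=
  {s | #s = 4 ∧ (∏ p ∈ s, linearFactor p).coeff 2 = 0}

variable [CharP F 3]

theorem mem_harmonicQuadruples_iff [DecidableEq (OnePoint F)] {p q r t : OnePoint F}
    (h : [p, q, r, t].Nodup) :
    {p, q, r, t} ∈ harmonicQuadruples F ↔ harmonicForm p q r t = 0 := by
  have toFinset_eq : ({p, q, r, t} : Finset (OnePoint F)) = [p, q, r, t].toFinset := by simp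
  rw [harmonicQuadruples, mem_filter_univ, toFinset_eq, List.toFinset_card_of_nodup h,
    List.prod_toFinset _ h]
  simp [coeff_two_prod_linearFactor]

theorem isSteinerOn_harmonicQuadruples : IsSteinerOn 3 4 (harmonicQuadruples F) := by
  classical
  refine ⟨fun s hs ↦ (mem_filter_univ s).1 hs |>.1, fun T hT ↦ ?_⟩
  obtain ⟨p, q, r, hpq, hpr, hqr, rfl⟩ := card_eq_three.1 hT
  have mem_iff (t) (ht : t ∉ ({p, q, r} : Finset _)) :
      insert t {p, q, r} ∈ harmonicQuadruples F ↔ harmonicForm t p q r = 0 :=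
    mem_harmonicQuadruples_iff (by simp_all)
  obtain ⟨t, ht, t_unique⟩ := existsUnique_harmonicForm_eq_zero hpq hpr hqr
  have t_notMem : t ∉ ({p, q, r} : Finset _) := fun h ↦
    harmonicForm_ne_zero_of_mem hpq hpr hqr h ht
  refine ⟨insert t {p, q, r}, ⟨(mem_iff t t_notMem).2 ht, subset_insert _ _⟩, ?_⟩
  rintro s ⟨hs, hTs⟩
  obtain ⟨u, hu, rfl⟩ := exists_eq_insert_iff.2
    ⟨hTs, by rw [hT, ((mem_filter_univ s).1 hs).1]⟩
  rw [t_unique u ((mem_iff u hu).1 hs)]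

section

variable [DecidableEq (OnePoint F)]

theorem image_smul_mem_harmonicQuadruples (g : GL (Fin 2) F) {s : Finset (OnePoint F)}
    (hs : s ∈ harmonicQuadruples F) : s.image (g • ·) ∈ harmonicQuadruples F := by
  obtain ⟨p, q, r, t, hpq, hpr, hpt, hqr, hqt, hrt, rfl⟩ :=
    card_eq_four.1 ((mem_filter_univ s).1 hs).1
  rw [mem_harmonicQuadruples_iff (by simp_all)] at hs
  simp only [image_insert, image_singleton]
  rw [mem_harmonicQuadruples_iff (by simp_all)]
  exact (harmonicForm_smul_eq_zero_iff g p q r t).2 hs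

theorem image_smul_harmonicQuadruples (g : GL (Fin 2) F) :
    (harmonicQuadruples F).image (Finset.image (g • ·)) = harmonicQuadruples F :=
  eq_of_subset_of_card_le
    (image_subset_iff.2 fun _ ↦ image_smul_mem_harmonicQuadruples g)
    (card_image_of_injective _ (image_injective (MulAction.injective g))).ge

theorem insert_infty_mem_harmonicQuadruples_iff {S : Finset F} :
    insert ∞ (S.image ((↑) : F → OnePoint F)) ∈ harmonicQuadruples F ↔
      S ∈ zeroSumTriples (id : F → F) := by
  have card_insert : #(insert ∞ (S.image ((↑) : F → OnePoint F))) = #S + 1 := by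
    rw [card_insert_of_notMem (by simp), card_image_of_injective _ OnePoint.coe_injective]
  by_cases hS : #S = 3
  · obtain ⟨a, b, c, hab, hac, hbc, rfl⟩ := card_eq_three.1 hS
    simp only [image_insert, image_singleton]
    rw [mem_harmonicQuadruples_iff (by simp_all), harmonicForm_infty, neg_eq_zero,
      mem_zeroSumTriples, sum_insert (by simp_all), sum_pair hbc, ← add_assoc]
    exact (and_iff_right hS).symm
  · simp [harmonicQuadruples, mem_zeroSumTriples, hS, card_insert]

theorem derivedBlocksAt_infty_harmonicQuadruples :
    derivedBlocksAt (harmonicQuadruples F) ∞ =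
      (zeroSumTriples (id : F → F)).image (Finset.image ((↑) : F → OnePoint F)) := by
  ext T
  simp only [derivedBlocksAt, mem_image, mem_filter]
  constructor
  · rintro ⟨s, ⟨hs, infty_mem⟩, rfl⟩
    obtain ⟨S, -, hS⟩ := subset_image_iff.1
      ((erase_subset_erase ∞ (subset_univ s)).trans univ_erase_infty.subset)
    refine ⟨S, insert_infty_mem_harmonicQuadruples_iff.1 ?_, hS⟩
    rwa [hS, insert_erase infty_mem]
  · rintro ⟨S, hS, rfl⟩
    exact ⟨_, ⟨insert_infty_mem_harmonicQuadruples_iff.2 hS, mem_insert_self _ _⟩,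
      erase_insert (by simp)⟩

theorem exists_isStarResolution_derivedBlocksAt {ι : Type*} [Fintype ι] {b : ι → Finset F}
    {P : ι → Fin 3 → _} (h : IsStarResolution univ (zeroSumTriples (id : F → F)) b P)
    (x : OnePoint F) : ∃ (b' : ι → Finset (OnePoint F)) (P' : ι → Fin 3 → _),
      IsStarResolution (univ.erase x) (derivedBlocksAt (harmonicQuadruples F) x) b' P' := by
  obtain ⟨g, rfl⟩ := OnePoint.exists_mem_SL2 F x
  have smul_injective := MulAction.injective (β := OnePoint F) (Matrix.SpecialLinearGroup.mapGL F g)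
  have h_smul := (h.image OnePoint.coe_injective).image smul_injective
  rw [← derivedBlocksAt_infty_harmonicQuadruples, ← derivedBlocksAt_image smul_injective,
    image_smul_harmonicQuadruples, ← univ_erase_infty, image_erase smul_injective,
    image_univ_of_surjective (MulAction.surjective _)] at h_smul
  exact ⟨_, _, h_smul⟩

end

theorem exists_isRDSQSstar_of_isStarResolution {ι : Type*} [Fintype ι]
    (hι : Fintype.card F = 3 * Fintype.card ι) {b : ι → Finset F} {P : ι → Fin 3 → _}
    (h : IsStarResolution univ (zeroSumTriples (id : F → F)) b P) :
    ∃ X B, IsRDSQSstar (Fintype.card F + 1) X B := by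
  classical
  have card_eq : Fintype.card (OnePoint F) = Fintype.card F + 1 := Fintype.card_option
  obtain ⟨f, hf⟩ := Countable.exists_injective_nat (OnePoint F)
  rw [← card_eq]
  refine ⟨_, _, isSteinerOn_harmonicQuadruples.isRDSQSstar_image (by lia) (fun x ↦ ?_) hf⟩
  obtain ⟨b', P', h'⟩ := exists_isStarResolution_derivedBlocksAt h x
  exact ⟨_, _, h'.reindex (Fintype.equivFinOfCardEq (by lia)).symm⟩

end Quadruples

end HarmonicQuadruples

section Translates

open scoped Pointwise

variable {V : Type*} [AddCommGroup V] [Fintype V] [DecidableEq V]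

theorem IsParallelClassOn.vadd {Q : Finset (Finset V)} (hQ : IsParallelClassOn univ Q) (p : V) :
    IsParallelClassOn univ (p +ᵥ Q) := by
  have := hQ.image (AddAction.injective (β := V) p)
  rwa [image_univ_of_surjective (AddAction.surjective p)] at this

theorem card_filter_mem_vadd {D Q : Finset (Finset V)} (vadd_mem : ∀ p : V, ∀ T ∈ D, p +ᵥ T ∈ D)
    (eq_of_mem : ∀ S ∈ D, ∀ T ∈ D, ∀ a b, a ≠ b → a ∈ S → b ∈ S → a ∈ T → b ∈ T → S = T)
    (hQ : Q ⊆ D) {T : Finset V} (hT : T ∈ D) {a b : V} (hab : a ≠ b) (ha : a ∈ T) (hb : b ∈ T) :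
    #{p : V | T ∈ p +ᵥ Q} = #{p | ∃ B ∈ Q, p ∈ B ∧ p + (b - a) ∈ B} := by
  refine card_equiv (Equiv.subLeft a) fun p ↦ ?_
  have mem_translate {x : V} (hx : x ∈ T) : x - p ∈ -p +ᵥ T := by
    rw [sub_eq_neg_add]
    exact vadd_mem_vadd_finset hx
  simp only [mem_filter_univ, Equiv.subLeft_apply, sub_add_sub_cancel', ← neg_vadd_mem_iff]
  constructor
  · exact fun h ↦ ⟨_, h, mem_translate ha, mem_translate hb⟩
  · rintro ⟨B, hB, haB, hbB⟩
    rwa [eq_of_mem (-p +ᵥ T) (vadd_mem _ T hT) B (hQ hB) (a - p) (b - p) (by simpa using hab)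
      (mem_translate ha) (mem_translate hb) haB hbB]

end Translates

section AffineSpace

open scoped Pointwise

/-- The three-dimensional space over the field with three elements, split as a plane (thought of as
the field with nine elements, generated over `ZMod 3` by a square root of `-1`) times a line. -/
abbrev AffineSpace27 : Type := (ZMod 3 × ZMod 3) × ZMod 3

/-- The coordinates `(w, t - N w)`, where `N (x, y) = x ^ 2 + y ^ 2` is the norm from the field with
nine elements. The lines read off in these coordinates form an affine space that is invariant under
the original translations and also under `normSimilarity`. -/
def paraboloidShear : AffineSpace27 ≃ AffineSpace27 :=
  Equiv.prodShear (Equiv.refl _) fun w ↦ Equiv.subRight (w.1 ^ 2 + w.2 ^ 2)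

/-- The linear part of the translation by `p` in the coordinates `paraboloidShear`; the correction
term is the polar form of the norm. -/
def tangentShear (p : AffineSpace27) : AffineSpace27 →+ AffineSpace27 where
  toFun v := (v.1, v.2 - 2 * (p.1.1 * v.1.1 + p.1.2 * v.1.2))
  map_zero' := by simp
  map_add' u v := Prod.ext rfl <| by
    simp only [Prod.fst_add, Prod.snd_add]
    ring

theorem paraboloidShear_vadd (p v : AffineSpace27) :
    paraboloidShear (p +ᵥ v) = tangentShear p (paraboloidShear v) + paraboloidShear p := by
  ext
  · exact add_comm _ _
  · exact add_comm _ _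
  · simp only [paraboloidShear, tangentShear, Equiv.prodShear_apply, Equiv.refl_apply,
      Equiv.subRight_apply, AddMonoidHom.coe_mk, ZeroHom.coe_mk, vadd_eq_add, Prod.fst_add,
      Prod.snd_add]
    ring

theorem vadd_mem_zeroSumTriples (p : AffineSpace27) {T : Finset AffineSpace27}
    (hT : T ∈ zeroSumTriples paraboloidShear) : p +ᵥ T ∈ zeroSumTriples paraboloidShear := by
  obtain ⟨card_eq, sum_eq⟩ := mem_zeroSumTriples.1 hT
  have three_nsmul : 3 • paraboloidShear p = 0 := ZModModule.char_nsmul_eq_zero 3 _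
  refine (image_mem_zeroSumTriples (AddAction.injective p)).2 (mem_zeroSumTriples.2 ⟨card_eq, ?_⟩)
  simp only [Function.comp_apply, paraboloidShear_vadd, sum_add_distrib, sum_const, card_eq,
    three_nsmul, ← map_sum, sum_eq, map_zero, add_zero]

/-- The line in the direction of the last coordinate above the point `w` of the plane. -/
def verticalLine (w : ZMod 3 × ZMod 3) : Finset AffineSpace27 := {w} ×ˢ univ

theorem mem_verticalLine {w : ZMod 3 × ZMod 3} {v : AffineSpace27} :
    v ∈ verticalLine w ↔ v.1 = w := by
  simp only [verticalLine, mem_product, mem_singleton, mem_univ, and_true]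

theorem verticalLine_mem_zeroSumTriples (w : ZMod 3 × ZMod 3) :
    verticalLine w ∈ zeroSumTriples paraboloidShear :=
  mem_zeroSumTriples.2 (by decide +revert)

theorem vadd_verticalLine (p : AffineSpace27) (w : ZMod 3 × ZMod 3) :
    p +ᵥ verticalLine w = verticalLine (p.1 + w) := by
  ext v
  rw [← neg_vadd_mem_iff, mem_verticalLine, mem_verticalLine, vadd_eq_add, Prod.fst_add,
    Prod.fst_neg, neg_add_eq_iff_eq_add]

theorem verticalLine_injective : Function.Injective verticalLine := fun w w' h ↦
  mem_verticalLine.1 (h ▸ mem_verticalLine.2 rfl : (w, 0) ∈ verticalLine w')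

theorem isParallelClassOn_image_verticalLine :
    IsParallelClassOn univ (univ.image verticalLine) := by
  refine ⟨fun _ _ ↦ subset_univ _, fun v _ ↦ ⟨verticalLine v.1,
    ⟨mem_image_of_mem _ (mem_univ _), mem_verticalLine.2 rfl⟩, ?_⟩⟩
  rintro _ ⟨hT, hv⟩
  obtain ⟨w, -, rfl⟩ := mem_image.1 hT
  rw [mem_verticalLine.1 hv]

theorem mem_image_verticalLine_iff {T : Finset AffineSpace27}
    (hT : T ∈ zeroSumTriples paraboloidShear) {a b : AffineSpace27} (hab : a ≠ b) (ha : a ∈ T)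
    (hb : b ∈ T) : T ∈ univ.image verticalLine ↔ (b - a).1 = 0 := by
  rw [Prod.fst_sub, sub_eq_zero, mem_image]
  constructor
  · rintro ⟨w, -, rfl⟩
    rw [mem_verticalLine.1 ha, mem_verticalLine.1 hb]
  · intro hfst
    exact ⟨a.1, mem_univ _, eq_of_mem_zeroSumTriples paraboloidShear.injective
      (verticalLine_mem_zeroSumTriples _) hT hab (mem_verticalLine.2 rfl) (mem_verticalLine.2 hfst)
      ha hb⟩

/-- Multiplication by the generator `1 + i` of the multiplicative group of the field with nine
elements on the plane, and by its norm `-1` on the last coordinate. -/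
def normSimilarity : AffineSpace27 →+ AffineSpace27 where
  toFun v := ((v.1.1 - v.1.2, v.1.1 + v.1.2), -v.2)
  map_zero' := rfl
  map_add' u v := by
    ext <;> simp only [Prod.fst_add, Prod.snd_add] <;> ring

theorem normSimilarity_injective : Function.Injective normSimilarity := by decide

theorem paraboloidShear_comp_normSimilarity :
    paraboloidShear ∘ normSimilarity = normSimilarity ∘ paraboloidShear := by decide

/-- A triple found by search. The ratio `t / N w` takes each value once on it, and it separates the
orbits of `normSimilarity` on the points with `w ≠ 0`. -/
def baseTriple : Finset AffineSpace27 := {((-1, -1), 2), ((1, 0), 2), ((0, 1), 0)}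

/-- The parallel class formed by the vertical line through the origin and the orbit of `baseTriple`
under the group of order eight generated by `normSimilarity`. -/
def baseClass : Finset (Finset AffineSpace27) :=
  insert (verticalLine 0) ((range 8).image fun j ↦ (Finset.image normSimilarity)^[j] baseTriple)

theorem isParallelClassOn_baseClass : IsParallelClassOn univ baseClass :=
  isParallelClassOn_univ_iff.2 (by decide +kernel)

theorem baseClass_subset_zeroSumTriples : baseClass ⊆ zeroSumTriples paraboloidShear := by
  have mapsTo : Set.MapsTo (Finset.image normSimilarity) (zeroSumTriples paraboloidShear)
      (zeroSumTriples paraboloidShear) := fun T hT ↦ by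
    rwa [mem_coe, image_mem_zeroSumTriples normSimilarity_injective,
      paraboloidShear_comp_normSimilarity, zeroSumTriples_comp normSimilarity_injective]
  refine insert_subset (verticalLine_mem_zeroSumTriples 0) (image_subset_iff.2 fun j _ ↦ ?_)
  exact mapsTo.iterate j (mem_zeroSumTriples.2 (by decide))

theorem card_differences_baseClass : ∀ d : AffineSpace27, d ≠ 0 →
    #{p | ∃ B ∈ baseClass, p ∈ B ∧ p + d ∈ B} = if d.1 = 0 then 3 else 2 := by
  decide +kernel

theorem isStarResolution_vadd_baseClass : IsStarResolution univ (zeroSumTriples paraboloidShear)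
    verticalLine (fun w l ↦ ((w, l) : AffineSpace27) +ᵥ baseClass) where
  injective := verticalLine_injective
  isParallelClassOn_image := isParallelClassOn_image_verticalLine
  isParallelClassOn w l := isParallelClassOn_baseClass.vadd _
  subset w l := image_subset_iff.2 fun T hT ↦
    vadd_mem_zeroSumTriples _ (baseClass_subset_zeroSumTriples hT)
  mem w l := mem_vadd_finset.2 ⟨verticalLine 0, mem_insert_self _ _, by simp [vadd_verticalLine]⟩
  card_filter_mem T hT := by
    obtain ⟨a, ha, b, hb, hab⟩ := one_lt_card.1
      ((mem_zeroSumTriples.1 hT).1.symm ▸ (by decide : 1 < 3))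
    simp only [mem_image_verticalLine_iff hT hab ha hb]
    rw [← card_differences_baseClass _ (sub_ne_zero.2 hab.symm)]
    exact card_filter_mem_vadd (fun p T ↦ vadd_mem_zeroSumTriples p)
      (fun S hS T hT a b ↦ eq_of_mem_zeroSumTriples paraboloidShear.injective hS hT)
      baseClass_subset_zeroSumTriples hT hab ha hb

theorem exists_isStarResolution_zeroSumTriples {A : Type*} [AddCommGroup A] [Fintype A]
    [DecidableEq A] (e : AffineSpace27 ≃+ A) :
    ∃ (b : ZMod 3 × ZMod 3 → Finset A) (P : ZMod 3 × ZMod 3 → Fin 3 → Finset (Finset A)),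
      IsStarResolution univ (zeroSumTriples (id : A → A)) b P := by
  have h := isStarResolution_vadd_baseClass.image (paraboloidShear.trans e.toEquiv).injective
  have triples_eq : zeroSumTriples paraboloidShear =
      zeroSumTriples (id ∘ paraboloidShear.trans e.toEquiv) :=
    (zeroSumTriples_comp (f := e.toAddMonoidHom) e.injective paraboloidShear).symm
  rw [image_univ_equiv, triples_eq, image_zeroSumTriples] at h
  exact ⟨_, _, h⟩

end AffineSpace

/-- There exists an RDSQS*(28). -/
theorem stmt_9 : ∃ X B, IsRDSQSstar 28 X B := by
  classical
  let : Fintype (GaloisField 3 3) := Fintype.ofFinite _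
  have card_galoisField : Fintype.card (GaloisField 3 3) = 27 := by
    rw [← Nat.card_eq_fintype_card, GaloisField.card 3 3 (by decide)]
    norm_num
  obtain ⟨e⟩ : Nonempty (AffineSpace27 ≃ₗ[ZMod 3] GaloisField 3 3) :=
    FiniteDimensional.nonempty_linearEquiv_of_finrank_eq (by simp [GaloisField.finrank])
  obtain ⟨b, P, h⟩ := exists_isStarResolution_zeroSumTriples e.toAddEquiv
  have card_eq : Fintype.card (GaloisField 3 3) = 3 * Fintype.card (ZMod 3 × ZMod 3) := by
    rw [card_galoisField]
    rfl
  simpa only [card_galoisField] using exists_isRDSQSstar_of_isStarResolution card_eq h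
end

section
/- There exists a 2-resolvable SQS(16), namely a Steiner quadruple system SQS(16) whose block collection can be partitioned into seven subcollections, each of which forms a resolvable S(2, 4, 16) on the same 16-element point set. -/
open Finset

/-!
The blocks are the affine planes of `V = F × 𝔽₂`, where `F` is the field of order `2 ^ m` with `m`
odd. A plane is a coset of a subgroup of order four, and a family of such subgroups that partitions
the nonzero vectors (a spread) yields a resolvable `S(2, 4, |V|)` whose parallel classes are the
coset partitions. So it suffices to partition the subgroups of order four into spreads.

Following Baker, give the subgroup spanned by `u = (x, i)` and `v = (y, j)` the colour
`x y (x + y) + (i y + j x) ^ 3`, which does not depend on the choice of `u` and `v`. As `m` is odd,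
`t ^ 2 + t + 1` has no root in `F`; hence for `u ≠ 0` the fibres of `v ↦ colour u v` are the pairs
`{v, u + v}`, and by counting every nonzero colour occurs on exactly one subgroup through `u`.
-/

noncomputable section

section Encoding

variable {α : Type*} (e : α ↪ ℕ)

/-- The copy on `ℕ` of a block collection on `α`, the points being labelled by `e`. -/
def encode (B : Finset (Finset α)) : Finset (Finset ℕ) :=
  B.map (mapEmbedding e).toEmbedding

theorem map_mem_encode {B : Finset (Finset α)} {b : Finset α} : b.map e ∈ encode e B ↔ b ∈ B :=
  mem_map' (mapEmbedding e).toEmbedding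

theorem forall_mem_encode {B : Finset (Finset α)} {p : Finset ℕ → Prop} :
    (∀ b ∈ encode e B, p b) ↔ ∀ b ∈ B, p (b.map e) :=
  forall_mem_map

theorem encode_subset_encode {B C : Finset (Finset α)} : encode e B ⊆ encode e C ↔ B ⊆ C :=
  map_subset_map

theorem existsUnique_mem_encode {B : Finset (Finset α)} {p : Finset ℕ → Prop}
    (h : ∃! b, b ∈ B ∧ p (b.map e)) : ∃! b, b ∈ encode e B ∧ p b := by
  obtain ⟨b, ⟨hbB, hpb⟩, hunique⟩ := h
  refine ⟨b.map e, ⟨(map_mem_encode e).2 hbB, hpb⟩, fun b' ⟨hb', hpb'⟩ => ?_⟩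
  obtain ⟨c, hc, rfl⟩ := mem_map.1 hb'
  exact congrArg (Finset.map e) (hunique c ⟨hc, hpb'⟩)

theorem existsUnique_encode_of_existsUnique {ι : Type*} {B : Finset (Finset α)}
    {P : ι → Finset (Finset α)} (h : ∀ b ∈ B, ∃! i, b ∈ P i) :
    ∀ b ∈ encode e B, ∃! i, b ∈ encode e (P i) := by
  simpa only [forall_mem_encode, map_mem_encode] using h

variable [Fintype α]

theorem isSteiner_encode {t k : ℕ} {B : Finset (Finset α)} (hcard : ∀ b ∈ B, #b = k)
    (hcover : ∀ T : Finset α, #T = t → ∃! b, b ∈ B ∧ T ⊆ b) :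
    IsSteiner t k (Fintype.card α) (univ.map e) (encode e B) := by
  refine ⟨card_map e, (forall_mem_encode e).2 fun b hb =>
    ⟨map_subset_map.2 (subset_univ b), (card_map e).trans (hcard b hb)⟩, fun T' hT' hT'card => ?_⟩
  obtain ⟨T, -, rfl⟩ := subset_map_iff.1 hT'
  apply existsUnique_mem_encode
  simpa only [map_subset_map] using hcover T ((card_map e).symm.trans hT'card)

theorem isParallelClass_encode {P : Finset (Finset α)} (h : ∀ x, ∃! b, b ∈ P ∧ x ∈ b) :
    IsParallelClass (univ.map e) (encode e P) := by
  refine ⟨(forall_mem_encode e).2 fun b _ => map_subset_map.2 (subset_univ b),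
    forall_mem_map.2 fun x _ => existsUnique_mem_encode e ?_⟩
  simpa only [mem_map'] using h x

theorem resolvable_encode {ι : Type*} [Finite ι] {B : Finset (Finset α)}
    {P : ι → Finset (Finset α)} (hP : ∀ i x, ∃! b, b ∈ P i ∧ x ∈ b) (hPB : ∀ i, P i ⊆ B)
    (hB : ∀ b ∈ B, ∃! i, b ∈ P i) : Resolvable (univ.map e) (encode e B) := by
  obtain ⟨r, ⟨index⟩⟩ := Finite.exists_equiv_fin ι
  refine ⟨r, fun i => encode e (P (index.symm i)), fun i => isParallelClass_encode e (hP _),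
    fun i => (encode_subset_encode e).2 (hPB _), ?_⟩
  exact existsUnique_encode_of_existsUnique e fun b hb =>
    (index.symm.bijective.existsUnique_iff (p := fun i => b ∈ P i)).1 (hB b hb)

end Encoding

section Cosets

variable {G : Type*} [AddGroup G] [Fintype G]

open Classical in
/-- The right coset `H + g`, as a finite set. -/
def coset (H : AddSubgroup G) (g : G) : Finset G := {x | x - g ∈ H}

open Classical in
/-- All right cosets of `H`. -/
def cosets (H : AddSubgroup G) : Finset (Finset G) := {b | ∃ g, coset H g = b}

open Classical in
/-- The blocks of the translation structure of `𝓗`: all right cosets of all members of `𝓗`. -/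
def translationBlocks (𝓗 : Set (AddSubgroup G)) : Finset (Finset G) :=
  {b | ∃ H ∈ 𝓗, b ∈ cosets H}

variable {H K : AddSubgroup G} {𝓗 : Set (AddSubgroup G)} {b : Finset G} {x g : G}

theorem mem_coset : x ∈ coset H g ↔ x - g ∈ H := by
  simp only [coset, mem_filter_univ]

theorem mem_cosets : b ∈ cosets H ↔ ∃ g, coset H g = b := by
  simp only [cosets, mem_filter_univ]

theorem mem_translationBlocks : b ∈ translationBlocks 𝓗 ↔ ∃ H ∈ 𝓗, b ∈ cosets H := by
  simp only [translationBlocks, mem_filter_univ]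

theorem coset_mem_cosets : coset H g ∈ cosets H :=
  mem_cosets.2 ⟨g, rfl⟩

theorem self_mem_coset : g ∈ coset H g := by
  simp only [mem_coset, sub_self, zero_mem]

theorem card_coset : #(coset H g) = Nat.card H := by
  classical
  rw [Nat.card_eq_fintype_card, Fintype.card_subtype]
  refine card_equiv (Equiv.subRight g) fun x => ?_
  simp only [mem_coset, Equiv.subRight_apply, mem_filter_univ]

theorem mem_cosets_iff_of_mem (hx : x ∈ b) : b ∈ cosets H ↔ b = coset H x := by
  refine ⟨fun hb => ?_, fun hb => hb ▸ coset_mem_cosets⟩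
  obtain ⟨g, rfl⟩ := mem_cosets.1 hb
  ext y
  rw [mem_coset, mem_coset, ← sub_add_sub_cancel y x g,
    H.add_mem_cancel_right (mem_coset.1 hx)]

theorem existsUnique_mem_cosets (H : AddSubgroup G) (x : G) : ∃! b, b ∈ cosets H ∧ x ∈ b :=
  ⟨coset H x, ⟨coset_mem_cosets, self_mem_coset⟩, fun _ ⟨hb, hx⟩ =>
    (mem_cosets_iff_of_mem hx).1 hb⟩

theorem coset_left_injective (g : G) : Function.Injective fun H : AddSubgroup G => coset H g := by
  intro H K h
  ext x
  simpa only [mem_coset, add_sub_cancel_right] using Finset.ext_iff.1 h (x + g)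

theorem eq_of_mem_cosets (hH : b ∈ cosets H) (hK : b ∈ cosets K) : H = K := by
  obtain ⟨g, rfl⟩ := mem_cosets.1 hH
  exact coset_left_injective g ((mem_cosets_iff_of_mem self_mem_coset).1 hK)

theorem coset_mem_translationBlocks : coset H g ∈ translationBlocks 𝓗 ↔ H ∈ 𝓗 := by
  refine ⟨fun h => ?_, fun h => mem_translationBlocks.2 ⟨H, h, coset_mem_cosets⟩⟩
  obtain ⟨K, hK, hgK⟩ := mem_translationBlocks.1 h
  rwa [eq_of_mem_cosets coset_mem_cosets hgK]

theorem forall_mem_translationBlocks {p : Finset G → Prop} :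
    (∀ b ∈ translationBlocks 𝓗, p b) ↔ ∀ H ∈ 𝓗, ∀ g, p (coset H g) := by
  simp only [mem_translationBlocks, mem_cosets]
  grind

theorem existsUnique_translationBlock {T : Finset G} (hx : x ∈ T)
    (h : ∃! H, H ∈ 𝓗 ∧ ∀ y ∈ T, y - x ∈ H) : ∃! b, b ∈ translationBlocks 𝓗 ∧ T ⊆ b := by
  obtain ⟨H, ⟨hH, hTH⟩, hunique⟩ := h
  refine ⟨coset H x, ⟨coset_mem_translationBlocks.2 hH, fun y hy => mem_coset.2 (hTH y hy)⟩,
    fun b ⟨hb, hTb⟩ => ?_⟩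
  obtain ⟨K, hK, hbK⟩ := mem_translationBlocks.1 hb
  obtain rfl := (mem_cosets_iff_of_mem (hTb hx)).1 hbK
  rw [hunique K ⟨hK, fun y hy => mem_coset.1 (hTb hy)⟩]

/-- The members of `𝓗` partition the nonzero elements of `G`; a spread, when `G` is a vector space
and `𝓗` consists of subspaces of equal dimension. -/
def IsGroupPartition (𝓗 : Set (AddSubgroup G)) : Prop :=
  ∀ x : G, x ≠ 0 → ∃! H, H ∈ 𝓗 ∧ x ∈ H

variable (e : G ↪ ℕ)

theorem IsGroupPartition.isSteiner {k : ℕ} (h𝓗 : IsGroupPartition 𝓗)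
    (hcard : ∀ H ∈ 𝓗, Nat.card H = k) :
    IsSteiner 2 k (Fintype.card G) (univ.map e) (encode e (translationBlocks 𝓗)) := by
  classical
  refine isSteiner_encode e
    (forall_mem_translationBlocks.2 fun H hH g => card_coset.trans (hcard H hH)) fun T hT => ?_
  obtain ⟨x, y, hxy, rfl⟩ := card_eq_two.1 hT
  apply existsUnique_translationBlock (mem_insert_self x {y})
  simpa only [forall_mem_insert, mem_singleton, forall_eq, sub_self, zero_mem, true_and] using
    h𝓗 (y - x) (sub_ne_zero.2 hxy.symm)

theorem resolvable_translationBlocks (𝓗 : Set (AddSubgroup G)) :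
    Resolvable (univ.map e) (encode e (translationBlocks 𝓗)) := by
  refine resolvable_encode e (P := fun H : 𝓗 => cosets (H : AddSubgroup G))
    (fun H => existsUnique_mem_cosets H.1)
    (fun H b hb => mem_translationBlocks.2 ⟨H, H.2, hb⟩) fun b hb => ?_
  obtain ⟨H, hH, hbH⟩ := mem_translationBlocks.1 hb
  exact ⟨⟨H, hH⟩, hbH, fun K hbK => Subtype.ext (eq_of_mem_cosets hbK hbH)⟩

end Cosets

theorem exists_mem_ne_zero_ne {G : Type*} [AddGroup G] {H : AddSubgroup G} (hH : 2 < Nat.card H)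
    (u : G) : ∃ v ∈ H, v ≠ 0 ∧ v ≠ u := by
  have hlt : ({0, u} : Set G).ncard < (H : Set G).ncard :=
    calc ({0, u} : Set G).ncard ≤ ({u} : Set G).ncard + 1 := Set.ncard_insert_le 0 {u}
      _ = 2 := by rw [Set.ncard_singleton]
      _ < Nat.card H := hH
  obtain ⟨v, hvH, hv⟩ := Set.exists_mem_notMem_of_ncard_lt_ncard hlt
  exact ⟨v, hvH, by simpa using hv⟩

section Planes

variable {V : Type*} [AddCommGroup V] [Module (ZMod 2) V]

/-- The subgroup `{0, u, v, u + v}` spanned by `u` and `v`. -/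
def planeSpan (u v : V) : AddSubgroup V where
  carrier := {0, u, v, u + v}
  zero_mem' := by simp
  add_mem' := by
    have hu := ZModModule.add_self u
    have hv := ZModModule.add_self v
    simp only [Set.mem_insert_iff, Set.mem_singleton_iff]
    grind
  neg_mem' := by simp [ZModModule.neg_eq_self]

variable {u v w : V} {H : AddSubgroup V}

theorem mem_planeSpan : w ∈ planeSpan u v ↔ w = 0 ∨ w = u ∨ w = v ∨ w = u + v :=
  Iff.rfl

theorem card_planeSpan (hu : u ≠ 0) (hv : v ≠ 0) (huv : u ≠ v) :
    Nat.card (planeSpan u v) = 4 := by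
  classical
  have hcarrier : (planeSpan u v : Set V) = ({0, u, v, u + v} : Finset V) := by
    ext w
    simp [mem_planeSpan]
  have hsum : u + v ≠ 0 := by rwa [← ZModModule.sub_eq_add, sub_ne_zero]
  have hcard : #({0, u, v, u + v} : Finset V) = 4 :=
    card_eq_four.2 ⟨0, u, v, u + v, hu.symm, hv.symm, hsum.symm, huv, by simpa using hv,
      by simpa using hu, rfl⟩
  rw [← SetLike.coe_sort_coe, hcarrier, Nat.card_coe_set_eq, Set.ncard_coe_finset, hcard]

theorem planeSpan_le (hu : u ∈ H) (hv : v ∈ H) : planeSpan u v ≤ H := by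
  rintro w (rfl | rfl | rfl | rfl)
  exacts [zero_mem H, hu, hv, add_mem hu hv]

theorem eq_planeSpan (hH : Nat.card H = 4) (hu : u ∈ H) (hv : v ∈ H) (hu0 : u ≠ 0) (hv0 : v ≠ 0)
    (huv : u ≠ v) : H = planeSpan u v := by
  have : Finite H := Nat.finite_of_card_ne_zero (by omega)
  exact (AddSubgroup.eq_of_le_of_card_ge (planeSpan_le hu hv)
    (by rw [hH, card_planeSpan hu0 hv0 huv])).symm

theorem existsUnique_card_eq_four (hu : u ≠ 0) (hv : v ≠ 0) (huv : u ≠ v) :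
    ∃! H : AddSubgroup V, Nat.card H = 4 ∧ u ∈ H ∧ v ∈ H :=
  ⟨planeSpan u v, ⟨card_planeSpan hu hv huv, by simp [mem_planeSpan], by simp [mem_planeSpan]⟩,
    fun _ ⟨hH, huH, hvH⟩ => eq_planeSpan hH huH hvH hu hv huv⟩

theorem isSteiner_affinePlanes [Fintype V] (e : V ↪ ℕ) :
    IsSteiner 3 4 (Fintype.card V) (univ.map e)
      (encode e (translationBlocks {H : AddSubgroup V | Nat.card H = 4})) := by
  classical
  refine isSteiner_encode e
    (forall_mem_translationBlocks.2 fun H hH g => card_coset.trans hH) fun T hT => ?_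
  obtain ⟨x, y, z, hxy, hxz, hyz, rfl⟩ := card_eq_three.1 hT
  apply existsUnique_translationBlock (mem_insert_self x {y, z})
  simpa only [Set.mem_ofPred_eq, forall_mem_insert, mem_singleton, forall_eq, sub_self, zero_mem,
    true_and] using existsUnique_card_eq_four (sub_ne_zero.2 hxy.symm) (sub_ne_zero.2 hxz.symm)
      (sub_left_injective.ne hyz)

end Planes

section Packings

variable {V κ : Type*} [AddCommGroup V] [Module (ZMod 2) V] [Fintype V]

/-- A packing of the projective space of `V`: its lines, that is, the subgroups of `V` of order
four, are partitioned into the spreads `𝓟 s`. -/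
structure IsPacking (𝓟 : κ → Set (AddSubgroup V)) : Prop where
  card_eq_four : ∀ s, ∀ H ∈ 𝓟 s, Nat.card H = 4
  isGroupPartition : ∀ s, IsGroupPartition (𝓟 s)
  existsUnique_mem : ∀ H : AddSubgroup V, Nat.card H = 4 → ∃! s, H ∈ 𝓟 s

theorem IsPacking.exists_twoResolvable [Fintype κ] {𝓟 : κ → Set (AddSubgroup V)}
    (h𝓟 : IsPacking 𝓟) {v r : ℕ} (hv : Fintype.card V = v) (hr : Fintype.card κ = r) :
    ∃ (X : Finset ℕ) (B : Finset (Finset ℕ)) (C : Fin r → Finset (Finset ℕ)),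
      IsSteiner 3 4 v X B ∧ (∀ i, C i ⊆ B) ∧ (∀ b ∈ B, ∃! i, b ∈ C i) ∧
      ∀ i, IsSteiner 2 4 v X (C i) ∧ Resolvable X (C i) := by
  subst hv
  let e : V ↪ ℕ := (Fintype.equivFin V).toEmbedding.trans Fin.valEmbedding
  let index : Fin r ≃ κ := (Fintype.equivFinOfCardEq hr).symm
  refine ⟨univ.map e, encode e (translationBlocks {H | Nat.card H = 4}),
    fun i => encode e (translationBlocks (𝓟 (index i))), isSteiner_affinePlanes e,
    fun i => (encode_subset_encode e).2 ?_, existsUnique_encode_of_existsUnique e ?_,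
    fun i => ⟨(h𝓟.isGroupPartition _).isSteiner e (h𝓟.card_eq_four _),
      resolvable_translationBlocks e _⟩⟩
  · exact forall_mem_translationBlocks.2 fun H hH g =>
      coset_mem_translationBlocks.2 (h𝓟.card_eq_four _ H hH)
  · refine forall_mem_translationBlocks.2 fun H hH g => ?_
    simp only [coset_mem_translationBlocks]
    exact (index.bijective.existsUnique_iff (p := fun s => H ∈ 𝓟 s)).1 (h𝓟.existsUnique_mem H hH)

end Packings

section Colourings

variable {V K : Type*} [AddCommGroup V] [Zero K]

/-- A colouring, by the nonzero elements of `K`, of the subgroups of order four of `V` in which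
every nonzero vector lies on exactly one subgroup of each colour. The colour of the subgroup spanned
by `u` and `v` is `c u v`; on dependent pairs `c` vanishes. -/
structure IsLineColouring (c : V → V → K) : Prop where
  comm : ∀ u v, c u v = c v u
  add_right : ∀ u v, c u (u + v) = c u v
  zero_right : ∀ u, c u 0 = 0
  eq_or_eq_add : ∀ {u v w}, u ≠ 0 → c u v = c u w → w = v ∨ w = u + v
  surjective : ∀ {u}, u ≠ 0 → Function.Surjective (c u)

/-- The subgroups of order four with colour `s`. -/
def colourClass (c : V → V → K) (s : K) : Set (AddSubgroup V) :=
  {H | Nat.card H = 4 ∧ ∀ u ∈ H, ∀ v ∈ H, u ≠ 0 → v ≠ 0 → u ≠ v → c u v = s}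

namespace IsLineColouring

variable {c : V → V → K} {u v : V}

theorem ne_zero (hc : IsLineColouring c) (hu : u ≠ 0) (hv : v ≠ 0) (huv : u ≠ v) : c u v ≠ 0 := by
  intro h
  have := hc.eq_or_eq_add hu ((hc.zero_right u).trans h.symm)
  grind

theorem self (hc : IsLineColouring c) (u : V) : c u u = 0 := by
  rw [← hc.zero_right u, ← hc.add_right u 0, add_zero]

variable [Module (ZMod 2) V]

theorem planeSpan_mem_colourClass (hc : IsLineColouring c) (hu : u ≠ 0) (hv : v ≠ 0)
    (huv : u ≠ v) : planeSpan u v ∈ colourClass c (c u v) := by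
  have hcolour : c v (u + v) = c u v := by rw [add_comm, hc.add_right, hc.comm]
  refine ⟨card_planeSpan hu hv huv, ?_⟩
  rintro a (rfl | rfl | rfl | rfl) b (rfl | rfl | rfl | rfl) ha hb hab <;>
    grind [hc.comm, hc.add_right]

theorem existsUnique_mem_colourClass (hc : IsLineColouring c) {H : AddSubgroup V}
    (hH : Nat.card H = 4) : ∃! s : {s : K // s ≠ 0}, H ∈ colourClass c s := by
  obtain ⟨u, huH, hu, -⟩ := exists_mem_ne_zero_ne (H := H) (by omega) 0
  obtain ⟨v, hvH, hv, hvu⟩ := exists_mem_ne_zero_ne (H := H) (by omega) u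
  refine ⟨⟨c u v, hc.ne_zero hu hv hvu.symm⟩, ?_, fun s hs => ?_⟩
  · rw [eq_planeSpan hH huH hvH hu hv hvu.symm]
    exact hc.planeSpan_mem_colourClass hu hv hvu.symm
  · exact Subtype.ext (hs.2 u huH v hvH hu hv hvu.symm).symm

theorem isGroupPartition_colourClass (hc : IsLineColouring c) {s : K} (hs : s ≠ 0) :
    IsGroupPartition (colourClass c s) := by
  intro u hu
  obtain ⟨v, rfl⟩ := hc.surjective hu s
  have hv : v ≠ 0 := fun h => hs (h ▸ hc.zero_right u)
  have huv : u ≠ v := fun h => hs (h ▸ hc.self u)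
  refine ⟨planeSpan u v, ⟨hc.planeSpan_mem_colourClass hu hv huv, by simp [mem_planeSpan]⟩,
    fun H ⟨⟨hH, hcolour⟩, huH⟩ => ?_⟩
  obtain ⟨w, hwH, hw, hwu⟩ := exists_mem_ne_zero_ne (H := H) (by omega) u
  have hvH : v ∈ H := by
    rcases hc.eq_or_eq_add hu (hcolour u huH w hwH hu hw hwu.symm).symm with rfl | rfl
    · exact hwH
    · exact (H.add_mem_cancel_left huH).1 hwH
  exact eq_planeSpan hH huH hvH hu hv huv

theorem isPacking (hc : IsLineColouring c) :
    IsPacking fun s : {s : K // s ≠ 0} => colourClass c s where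
  card_eq_four _ _ hH := hH.1
  isGroupPartition s := hc.isGroupPartition_colourClass s.2
  existsUnique_mem _ hH := hc.existsUnique_mem_colourClass hH

end IsLineColouring

end Colourings

theorem surjective_of_card_fibre_le {α β : Type*} [Fintype α] [Fintype β] [DecidableEq β]
    {f : α → β} {n : ℕ} (hn : 0 < n) (hcard : Fintype.card α = n * Fintype.card β)
    (hf : ∀ a, #{a' | f a' = f a} ≤ n) : Function.Surjective f := by
  have hle : n * Fintype.card β ≤ n * #(univ.image f) :=
    hcard ▸ card_le_mul_card_image univ n (forall_mem_image.2 fun a _ => hf a)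
  have hcard_image : #(univ.image f) = Fintype.card β :=
    (card_le_univ _).antisymm (Nat.le_of_mul_le_mul_left hle hn)
  exact fun b => by simpa using eq_univ_iff_forall.1 ((card_eq_iff_eq_univ _).1 hcard_image) b

section Cubing

variable {F : Type*} [Field F]

theorem sq_add_mul_add_sq_ne_zero (hF : ∀ t : F, t ^ 2 + t + 1 ≠ 0) (x : F) {y : F} (hy : y ≠ 0) :
    x ^ 2 + x * y + y ^ 2 ≠ 0 := by
  have hscale : x ^ 2 + x * y + y ^ 2 = y ^ 2 * ((x / y) ^ 2 + x / y + 1) := by field_simp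
  rw [hscale]
  exact mul_ne_zero (pow_ne_zero 2 hy) (hF _)

theorem pow_three_injective (hF : ∀ t : F, t ^ 2 + t + 1 ≠ 0) :
    Function.Injective fun x : F => x ^ 3 := by
  intro x y (hxy : x ^ 3 = y ^ 3)
  rcases eq_or_ne y 0 with rfl | hy
  · simpa using hxy
  have hfactor : (x - y) * (x ^ 2 + x * y + y ^ 2) = 0 := by linear_combination hxy
  exact sub_eq_zero.1 ((mul_eq_zero_iff_right (sq_add_mul_add_sq_ne_zero hF x hy)).1 hfactor)

theorem sq_add_self_add_one_ne_zero [Fintype F] [CharP F 2] (hF : Fintype.card F % 3 = 2) (t : F) :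
    t ^ 2 + t + 1 ≠ 0 := by
  intro ht
  have hcube : t ^ 3 = 1 := by linear_combination (t - 1) * ht
  have hsq : t ^ 2 = t :=
    calc t ^ 2 = (t ^ 3) ^ (Fintype.card F / 3) * t ^ 2 := by rw [hcube, one_pow, one_mul]
      _ = t ^ Fintype.card F := by rw [← pow_mul, ← pow_add, ← hF, Nat.div_add_mod]
      _ = t := FiniteField.pow_card t
  rw [hsq, CharTwo.add_self_eq_zero, zero_add] at ht
  exact one_ne_zero ht

end Cubing

section Baker

variable {F : Type*} [Field F] [Algebra (ZMod 2) F]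

/-- Baker's colouring of the lines of the projective space of `F × 𝔽₂`: the line through `u` and `v`
has colour `bakerColour u v`. -/
def bakerColour (u v : F × ZMod 2) : F :=
  u.1 * v.1 * (u.1 + v.1) + (u.2 • v.1 + v.2 • u.1) ^ 3

variable {u v w : F × ZMod 2} {x y z : F} {j k : ZMod 2}

theorem zmod_two_eq_zero_or_one (i : ZMod 2) : i = 0 ∨ i = 1 := by
  decide +revert

theorem two_eq_zero_of_algebra_zmod_two : (2 : F) = 0 := by
  rw [← one_add_one_eq_two, ZModModule.add_self]

theorem bakerColour_comm (u v : F × ZMod 2) : bakerColour u v = bakerColour v u := by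
  unfold bakerColour
  ring

theorem bakerColour_mk_zero : bakerColour (x, 0) (y, j) = x * y * (x + y) + j • x ^ 3 := by
  rcases zmod_two_eq_zero_or_one j with rfl | rfl <;> simp [bakerColour]

theorem bakerColour_mk_one :
    bakerColour (x, 1) (y, j) = x ^ 3 + (y + (1 + j) • x) ^ 3 := by
  have htwo : (2 : F) = 0 := two_eq_zero_of_algebra_zmod_two
  rcases zmod_two_eq_zero_or_one j with rfl | rfl <;>
    simp only [bakerColour, ZModModule.add_self, add_zero, zero_smul, one_smul] <;> grind

theorem bakerColour_add_right (u v : F × ZMod 2) :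
    bakerColour u (u + v) = bakerColour u v := by
  have htwo : (2 : F) = 0 := two_eq_zero_of_algebra_zmod_two
  obtain ⟨x, i⟩ := u
  obtain ⟨y, j⟩ := v
  rcases zmod_two_eq_zero_or_one i with rfl | rfl
  · simp only [Prod.mk_add_mk, bakerColour_mk_zero, zero_add]
    grind
  · simp only [Prod.mk_add_mk, bakerColour_mk_one, add_smul, one_smul]
    grind

theorem bakerColour_mk_zero_add (x : F) (v w : F × ZMod 2) :
    bakerColour (x, 0) (v + w) = bakerColour (x, 0) v + bakerColour (x, 0) w := by
  have htwo : (2 : F) = 0 := two_eq_zero_of_algebra_zmod_two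
  obtain ⟨y, j⟩ := v
  obtain ⟨z, k⟩ := w
  rw [Prod.mk_add_mk, bakerColour_mk_zero, bakerColour_mk_zero, bakerColour_mk_zero, add_smul]
  linear_combination x * y * z * htwo

theorem eq_zero_or_eq_of_bakerColour_mk_zero_eq_zero (hF : ∀ t : F, t ^ 2 + t + 1 ≠ 0)
    (hx : x ≠ 0) (h : bakerColour (x, 0) v = 0) : v = 0 ∨ v = (x, 0) := by
  obtain ⟨y, j⟩ := v
  rw [bakerColour_mk_zero] at h
  rcases zmod_two_eq_zero_or_one j with rfl | rfl
  · have hy : y = 0 ∨ x + y = 0 := by simpa [hx] using h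
    rw [← ZModModule.sub_eq_add, sub_eq_zero, eq_comm (a := x)] at hy
    simpa using hy
  · have hfactor : x * (y ^ 2 + y * x + x ^ 2) = 0 := by
      rw [one_smul] at h
      linear_combination h
    exact absurd hfactor (mul_ne_zero hx (sq_add_mul_add_sq_ne_zero hF y hx))

theorem bakerColour_mk_one_eq_iff (hF : ∀ t : F, t ^ 2 + t + 1 ≠ 0) :
    bakerColour (x, 1) (y, j) = bakerColour (x, 1) (z, k) ↔
      y + (1 + j) • x = z + (1 + k) • x := by
  rw [bakerColour_mk_one, bakerColour_mk_one, add_right_inj, (pow_three_injective hF).eq_iff]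

theorem eq_or_eq_add_of_bakerColour_eq (hF : ∀ t : F, t ^ 2 + t + 1 ≠ 0) (hu : u ≠ 0)
    (h : bakerColour u v = bakerColour u w) : w = v ∨ w = u + v := by
  suffices w - v = 0 ∨ w - v = u by rwa [sub_eq_zero, sub_eq_iff_eq_add] at this
  obtain ⟨x, i⟩ := u
  rcases zmod_two_eq_zero_or_one i with rfl | rfl
  · have hx : x ≠ 0 := fun hx => hu (by rw [hx, Prod.mk_zero_zero])
    apply eq_zero_or_eq_of_bakerColour_mk_zero_eq_zero hF hx
    rw [ZModModule.sub_eq_add, bakerColour_mk_zero_add, h, ZModModule.add_self]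
  · obtain ⟨y, j⟩ := v
    obtain ⟨z, k⟩ := w
    have hz : z - y = (j - k) • x := by
      have hlinear := (bakerColour_mk_one_eq_iff hF).1 h
      rw [add_smul, add_smul] at hlinear
      rw [sub_smul]
      linear_combination -hlinear
    have hsymm : k - j = j - k := by rw [ZModModule.sub_eq_add, ZModModule.sub_eq_add, add_comm]
    rw [Prod.mk_sub_mk, hz, hsymm]
    rcases zmod_two_eq_zero_or_one (j - k) with hjk | hjk <;> simp [hjk]

theorem surjective_bakerColour [Finite F] (hF : ∀ t : F, t ^ 2 + t + 1 ≠ 0) (hu : u ≠ 0) :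
    Function.Surjective (bakerColour u) := by
  classical
  have := Fintype.ofFinite F
  refine surjective_of_card_fibre_le two_pos
    (by rw [Fintype.card_prod, ZMod.card, mul_comm]) fun v => ?_
  refine (card_le_card fun w hw => ?_).trans (card_le_two (a := v) (b := u + v))
  simpa using eq_or_eq_add_of_bakerColour_eq hF hu (mem_filter_univ w |>.1 hw).symm

theorem isLineColouring_bakerColour [Finite F] (hF : ∀ t : F, t ^ 2 + t + 1 ≠ 0) :
    IsLineColouring (bakerColour (F := F)) where
  comm := bakerColour_comm
  add_right := bakerColour_add_right
  zero_right u := by simp [bakerColour]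
  eq_or_eq_add := eq_or_eq_add_of_bakerColour_eq hF
  surjective := surjective_bakerColour hF

end Baker

theorem two_pow_mod_three_of_odd {m : ℕ} (hm : Odd m) : 2 ^ m % 3 = 2 := by
  obtain ⟨k, rfl⟩ := hm
  rw [pow_succ, pow_mul, Nat.mul_mod, Nat.pow_mod]
  norm_num

end

theorem stmt_10_general {m : ℕ} (hm : Odd m) :
    ∃ (X : Finset ℕ) (B : Finset (Finset ℕ)) (C : Fin (2 ^ m - 1) → Finset (Finset ℕ)),
      IsSteiner 3 4 (2 ^ (m + 1)) X B ∧
      (∀ i, C i ⊆ B) ∧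
      (∀ b ∈ B, ∃! i, b ∈ C i) ∧
      ∀ i, IsSteiner 2 4 (2 ^ (m + 1)) X (C i) ∧ Resolvable X (C i) := by
  classical
  let F := GaloisField 2 m
  have : Fintype F := Fintype.ofFinite F
  have hF : Fintype.card F = 2 ^ m := by
    rw [← Nat.card_eq_fintype_card, GaloisField.card 2 m hm.pos.ne']
  have hroot : ∀ t : F, t ^ 2 + t + 1 ≠ 0 :=
    sq_add_self_add_one_ne_zero (by rw [hF, two_pow_mod_three_of_odd hm])
  refine (isLineColouring_bakerColour hroot).isPacking.exists_twoResolvable ?_ ?_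
  · rw [Fintype.card_prod, hF, ZMod.card, pow_succ]
  · rw [Fintype.card_subtype_compl, hF, Fintype.card_subtype_eq]

/-- There exists a 2-resolvable SQS(16): an SQS(16) whose block collection can
be partitioned into seven subcollections, each a resolvable S(2, 4, 16). -/
theorem stmt_10 :
    ∃ (X : Finset ℕ) (B : Finset (Finset ℕ)) (C : Fin 7 → Finset (Finset ℕ)),
      IsSteiner 3 4 16 X B ∧
      (∀ i, C i ⊆ B) ∧
      (∀ b ∈ B, ∃! i, b ∈ C i) ∧
      ∀ i, IsSteiner 2 4 16 X (C i) ∧ Resolvable X (C i) :=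
  stmt_10_general (m := 3) (by decide)
end

section
/- If there exists an RDSQS*(v), then there exists an RDSQS(4v). -/
open Finset

/-!
A quadruple system is a skein, a ternary operation completing three points to a quadruple. The
product of the skein of the given system with that of the additive group `K` of the field with four
elements, `a + b + c`, is a skein on `4 * v` points. The second coordinate can be translated, so it
suffices to resolve the derived triple system at `(x, 0)`, that is, to colour its triples with
`1 + 6 * ((v - 1) / 3)` colours so that every point meets every colour.

The blocks `Bₖ` of the special parallel class at `x` split the points into groups. Over each group
together with `x` lies a copy of `K × K`, that is, of the lines of `PG(3, 2)`, which are partitioned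
into seven spreads. One spread, chosen to contain the line over `x`, gets a colour common to all
groups, and the other six get colours belonging to the group. Over any other triple `T`, label its
points by the non-zero elements of `K`; a `2 × 2` determinant in labels and second coordinates then
splits the sixteen lifted triples into four parallel classes. As `T` lies in only two of the star
classes `P k l`, these four can be given the colours `(k, l, 0)` and `(k, l, 1)` for the two pairs
`(k, l)`; and a point outside the group `k` lies in a triple of each of `P k 1`, `P k 2`, `P k 3`,
so it meets all six colours of that group.
-/

/-- A Steiner loop with identity `e`: the algebraic form of a Steiner triple system on the
points other than `e`, where `op a b` completes `{a, b}` to a triple. -/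
structure IsSteinerLoop {α : Type*} (op : α → α → α) (e : α) : Prop where
  comm : ∀ a b, op a b = op b a
  id_op : ∀ a, op e a = a
  op_op : ∀ a b, op a (op a b) = b

/-- The triple of a Steiner loop spanned by `a` and `b`; it is a block of the Steiner triple
system when `a`, `b` and the identity are distinct. -/
def loopTriple {α : Type*} [DecidableEq α] (op : α → α → α) (a b : α) : Finset α :=
  {a, b, op a b}

namespace IsSteinerLoop

variable {α : Type*} {op : α → α → α} {e a b c x y : α}

theorem op_id (h : IsSteinerLoop op e) (a : α) : op a e = a := by
  rw [h.comm, h.id_op]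

theorem op_self (h : IsSteinerLoop op e) (a : α) : op a a = e := by
  simpa only [h.op_id] using h.op_op a e

theorem op_ne_id (h : IsSteinerLoop op e) (hab : a ≠ b) : op a b ≠ e := fun heq =>
  hab (by rw [← h.op_op a b, heq, h.op_id])

theorem op_ne_left (h : IsSteinerLoop op e) (hb : b ≠ e) : op a b ≠ a := fun heq =>
  hb (by rw [← h.op_op a b, heq, h.op_self])

theorem op_ne_right (h : IsSteinerLoop op e) (ha : a ≠ e) : op a b ≠ b := by
  rw [h.comm]
  exact h.op_ne_left ha

variable [DecidableEq α]

theorem loopTriple_comm (h : IsSteinerLoop op e) (a b : α) :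
    loopTriple op a b = loopTriple op b a := by
  rw [loopTriple, loopTriple, h.comm a b, insert_comm]

theorem loopTriple_op (h : IsSteinerLoop op e) (a b : α) :
    loopTriple op a (op a b) = loopTriple op a b := by
  rw [loopTriple, loopTriple, h.op_op, pair_comm]

theorem eq_of_mem_loopTriple {β : Type*} (h : IsSteinerLoop op e) {g : α → α → β}
    (g_comm : ∀ a b, g a b = g b a) (g_op : ∀ a b, g a (op a b) = g a b) (hxy : x ≠ y)
    (hx : x ∈ loopTriple op a b) (hy : y ∈ loopTriple op a b) : g x y = g a b := by
  have g_right_op : g b (op a b) = g a b := by rw [h.comm, g_op, g_comm]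
  simp only [loopTriple, mem_insert, mem_singleton] at hx hy
  grind

theorem loopTriple_eq_of_mem (h : IsSteinerLoop op e) (hxy : x ≠ y)
    (hx : x ∈ loopTriple op a b) (hy : y ∈ loopTriple op a b) :
    loopTriple op x y = loopTriple op a b :=
  h.eq_of_mem_loopTriple h.loopTriple_comm h.loopTriple_op hxy hx hy

theorem id_notMem_loopTriple (h : IsSteinerLoop op e) (ha : a ≠ e) (hb : b ≠ e) (hab : a ≠ b) :
    e ∉ loopTriple op a b := by
  simp only [loopTriple, mem_insert, mem_singleton, not_or]
  exact ⟨ha.symm, hb.symm, (h.op_ne_id hab).symm⟩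

theorem card_loopTriple (h : IsSteinerLoop op e) (ha : a ≠ e) (hb : b ≠ e) (hab : a ≠ b) :
    (loopTriple op a b).card = 3 :=
  card_eq_three.2 ⟨a, b, _, hab, (h.op_ne_left hb).symm, (h.op_ne_right ha).symm, rfl⟩

theorem exists_loopTriple_eq (h : IsSteinerLoop op e) (ha : a ≠ e) (hb : b ≠ e) (hab : a ≠ b)
    (hx : x ∈ loopTriple op a b) :
    ∃ y, y ≠ e ∧ x ≠ y ∧ loopTriple op x y = loopTriple op a b := by
  have hcard : 1 < (loopTriple op a b).card := by rw [h.card_loopTriple ha hb hab]; norm_num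
  obtain ⟨y, hy, hyx⟩ := exists_mem_ne hcard x
  exact ⟨y, ne_of_mem_of_not_mem hy (h.id_notMem_loopTriple ha hb hab), hyx.symm,
    h.loopTriple_eq_of_mem hyx.symm hx hy⟩

end IsSteinerLoop

/-- The blocks of the Steiner triple system of a Steiner loop, transported to `ℕ` along `f`. -/
noncomputable def loopBlocks {α : Type*} [Fintype α] [DecidableEq α] (op : α → α → α) (e : α)
    (f : α ↪ ℕ) : Finset (Finset ℕ) :=
  ({t | t.1 ≠ e ∧ t.2 ≠ e ∧ t.1 ≠ t.2} : Finset (α × α)).image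
    fun t => (loopTriple op t.1 t.2).map f

theorem mem_loopBlocks {α : Type*} [Fintype α] [DecidableEq α] {op : α → α → α} {e : α}
    {f : α ↪ ℕ} {T : Finset ℕ} :
    T ∈ loopBlocks op e f ↔
      ∃ a b, a ≠ e ∧ b ≠ e ∧ a ≠ b ∧ (loopTriple op a b).map f = T := by
  simp only [loopBlocks, mem_image, mem_filter_univ, Prod.exists, and_assoc]

/-- A resolution of the Steiner triple system of a loop, encoded as a colouring of pairs of points
that is constant on triples: the colour classes of triples are the parallel classes. -/
structure IsKirkmanColouring {α ι : Type*} (op : α → α → α) (e : α) (col : α → α → ι) : Prop where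
  comm : ∀ a b, col a b = col b a
  op_right : ∀ a b, col a (op a b) = col a b
  exists_eq : ∀ a, a ≠ e → ∀ i, ∃ b, b ≠ e ∧ a ≠ b ∧ col a b = i

namespace IsKirkmanColouring

variable {α β ι : Type*} {op : α → α → α} {e a b c : α} {col : α → α → ι}

theorem comp {op' : β → β → β} {e' : β} {col : β → β → ι} (hcol : IsKirkmanColouring op' e' col)
    (σ : α ≃ β) (hσ : ∀ a b, σ (op a b) = op' (σ a) (σ b)) (he : σ e = e') :
    IsKirkmanColouring op e fun a b => col (σ a) (σ b) where
  comm a b := hcol.comm _ _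
  op_right a b := by rw [hσ, hcol.op_right]
  exists_eq a ha i := by
    obtain ⟨b, hb, hab, rfl⟩ := hcol.exists_eq (σ a) (he ▸ σ.injective.ne ha) i
    refine ⟨σ.symm b, ?_, ?_, by rw [σ.apply_symm_apply]⟩
    · rwa [Ne, σ.symm_apply_eq, he]
    · rwa [Ne, σ.eq_symm_apply]

/-- The colours at `a` partition the other points into sets of size at least two, namely
`{b, op a b}`; since there are only `2 * card ι` such points, the sets have size exactly two. -/
theorem eq_or_eq_op [Fintype α] [Fintype ι] (h : IsSteinerLoop op e)
    (hcol : IsKirkmanColouring op e col) (hcard : 2 * Fintype.card ι + 2 = Fintype.card α)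
    (ha : a ≠ e) (hb : b ≠ e) (hc : c ≠ e) (hab : a ≠ b) (hac : a ≠ c)
    (hbc : col a b = col a c) : c = b ∨ c = op a b := by
  classical
  let others : Finset α := {e, a}ᶜ
  let fibre (i : ι) : Finset α := {x ∈ others | col a x = i}
  have mem_fibre {i x} : x ∈ fibre i ↔ (x ≠ e ∧ x ≠ a) ∧ col a x = i := by simp [fibre, others]
  have pair_subset {x} (hx : x ≠ e) (hax : a ≠ x) : {x, op a x} ⊆ fibre (col a x) :=
    insert_subset (mem_fibre.2 ⟨⟨hx, hax.symm⟩, rfl⟩) <| singleton_subset_iff.2 <|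
      mem_fibre.2 ⟨⟨h.op_ne_id hax, h.op_ne_left hx⟩, hcol.op_right a x⟩
  have card_pair_op (x) : ({x, op a x} : Finset α).card = 2 := card_pair (h.op_ne_right ha).symm
  have two_le (i) : 2 ≤ (fibre i).card := by
    obtain ⟨x, hx, hax, rfl⟩ := hcol.exists_eq a ha i
    exact card_pair_op x ▸ card_le_card (pair_subset hx hax)
  have card_others : others.card = ∑ _i : ι, 2 := by
    rw [card_compl, card_pair ha.symm, sum_const, card_univ, smul_eq_mul]
    omega
  have card_fibre (i) : (fibre i).card = 2 := by
    rw [card_eq_sum_card_fiberwise (t := univ) fun x _ => mem_univ (col a x)] at card_others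
    exact ((sum_eq_sum_iff_of_le fun i _ => two_le i).1 card_others.symm i (mem_univ i)).symm
  have hfibre : {b, op a b} = fibre (col a b) :=
    eq_of_subset_of_card_le (pair_subset hb hab) (by rw [card_fibre, card_pair_op])
  have hmem : c ∈ fibre (col a b) := mem_fibre.2 ⟨⟨hc, hac.symm⟩, hbc.symm⟩
  simpa only [← hfibre, mem_insert, mem_singleton] using hmem

variable [Fintype α] [DecidableEq α] {f : α ↪ ℕ}

open Classical in
/-- The set of triples of colour `i`, transported to `ℕ` along `f`. -/
noncomputable def colourClass (op : α → α → α) (e : α) (col : α → α → ι) (f : α ↪ ℕ) (i : ι) :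
    Finset (Finset ℕ) :=
  {T ∈ loopBlocks op e f |
    ∃ a b, a ≠ e ∧ b ≠ e ∧ a ≠ b ∧ col a b = i ∧ (loopTriple op a b).map f = T}

theorem mem_colourClass {i : ι} {T : Finset ℕ} : T ∈ colourClass op e col f i ↔
    ∃ a b, a ≠ e ∧ b ≠ e ∧ a ≠ b ∧ col a b = i ∧ (loopTriple op a b).map f = T := by
  classical
  rw [colourClass, mem_filter, mem_loopBlocks, and_iff_right_of_imp]
  rintro ⟨a, b, ha, hb, hab, -, rfl⟩
  exact ⟨a, b, ha, hb, hab, rfl⟩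

theorem isParallelClass_colourClass [Fintype ι] (h : IsSteinerLoop op e)
    (hcol : IsKirkmanColouring op e col) (hcard : 2 * Fintype.card ι + 2 = Fintype.card α)
    (i : ι) : IsParallelClass ((univ.erase e).map f) (colourClass op e col f i) := by
  constructor
  · intro T hT
    obtain ⟨a, b, ha, hb, hab, -, rfl⟩ := mem_colourClass.1 hT
    exact map_subset_map.2
      (subset_erase.2 ⟨subset_univ _, h.id_notMem_loopTriple ha hb hab⟩)
  · intro y hy
    obtain ⟨a, ha, rfl⟩ := mem_map.1 hy
    replace ha : a ≠ e := ne_of_mem_erase ha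
    obtain ⟨b, hb, hab, rfl⟩ := hcol.exists_eq a ha i
    refine ⟨(loopTriple op a b).map f,
      ⟨mem_colourClass.2 ⟨a, b, ha, hb, hab, rfl, rfl⟩, by simp [loopTriple]⟩, ?_⟩
    rintro _ ⟨hT, haT⟩
    obtain ⟨c, d, hc, hd, hcd, hcol_eq, rfl⟩ := mem_colourClass.1 hT
    rw [mem_map'] at haT
    obtain ⟨w, hw, haw, hTw⟩ := h.exists_loopTriple_eq hc hd hcd haT
    have hcol_w : col c d = col a w := by
      refine h.eq_of_mem_loopTriple hcol.comm hcol.op_right hcd ?_ ?_ <;>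
        rw [hTw] <;> simp [loopTriple]
    rw [← hTw]
    rcases eq_or_eq_op h hcol hcard ha hb hw hab haw (hcol_eq.symm.trans hcol_w) with rfl | rfl
    · rfl
    · rw [h.loopTriple_op]

theorem resolvable_loopBlocks [Fintype ι] (h : IsSteinerLoop op e)
    (hcol : IsKirkmanColouring op e col) (hcard : 2 * Fintype.card ι + 2 = Fintype.card α) :
    Resolvable ((univ.erase e).map f) (loopBlocks op e f) := by
  classical
  let n := Fintype.equivFin ι
  refine ⟨Fintype.card ι, fun i => colourClass op e col f (n.symm i),
    fun i => isParallelClass_colourClass h hcol hcard _, fun i => filter_subset _ _, ?_⟩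
  intro T hT
  obtain ⟨a, b, ha, hb, hab, rfl⟩ := mem_loopBlocks.1 hT
  refine ⟨n (col a b), mem_colourClass.2 ⟨a, b, ha, hb, hab, by simp, rfl⟩, fun j hj => ?_⟩
  obtain ⟨c, d, -, -, -, hcd, hmap⟩ := mem_colourClass.1 hj
  have hT : loopTriple op c d = loopTriple op a b := map_injective f hmap
  have hcol_eq : col a b = col c d := by
    refine h.eq_of_mem_loopTriple hcol.comm hcol.op_right hab ?_ ?_ <;>
      rw [hT] <;> simp [loopTriple]
  rw [hcol_eq, hcd, n.apply_symm_apply]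

end IsKirkmanColouring

/-- A Steiner skein: the algebraic form of a Steiner quadruple system, where `q a b c` completes
`{a, b, c}` to a quadruple. -/
structure IsSteinerSkein {α : Type*} (q : α → α → α → α) : Prop where
  swap_left : ∀ a b c, q a b c = q b a c
  swap_right : ∀ a b c, q a b c = q a c b
  self_left : ∀ a b, q a a b = b
  involutive : ∀ a b c, q a b (q a b c) = c

/-- The quadruple of a Steiner skein spanned by three points. -/
def skeinQuadruple {α : Type*} [DecidableEq α] (q : α → α → α → α) (a b c : α) : Finset α :=
  insert a (loopTriple (q a) b c)

/-- The blocks of the Steiner quadruple system of a Steiner skein, transported to `ℕ` along `f`. -/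
noncomputable def skeinBlocks {α : Type*} [Fintype α] [DecidableEq α] (q : α → α → α → α)
    (f : α ↪ ℕ) : Finset (Finset ℕ) :=
  ({t | t.1 ≠ t.2.1 ∧ t.1 ≠ t.2.2 ∧ t.2.1 ≠ t.2.2} : Finset (α × α × α)).image
    fun t => (skeinQuadruple q t.1 t.2.1 t.2.2).map f

theorem mem_skeinBlocks {α : Type*} [Fintype α] [DecidableEq α] {q : α → α → α → α} {f : α ↪ ℕ}
    {S : Finset ℕ} :
    S ∈ skeinBlocks q f ↔
      ∃ a b c, a ≠ b ∧ a ≠ c ∧ b ≠ c ∧ (skeinQuadruple q a b c).map f = S := by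
  simp only [skeinBlocks, mem_image, mem_filter_univ, Prod.exists, and_assoc]

namespace IsSteinerSkein

variable {α β ι : Type*} {q : α → α → α → α} {a b c p x y z : α}

theorem loop (h : IsSteinerSkein q) (p : α) : IsSteinerLoop (q p) p where
  comm := h.swap_right p
  id_op := h.self_left p
  op_op := h.involutive p

theorem prod {r : β → β → β → β} (hq : IsSteinerSkein q) (hr : IsSteinerSkein r) :
    IsSteinerSkein fun a b c : α × β => (q a.1 b.1 c.1, r a.2 b.2 c.2) where
  swap_left _ _ _ := Prod.ext (hq.swap_left _ _ _) (hr.swap_left _ _ _)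
  swap_right _ _ _ := Prod.ext (hq.swap_right _ _ _) (hr.swap_right _ _ _)
  self_left _ _ := Prod.ext (hq.self_left _ _) (hr.self_left _ _)
  involutive _ _ _ := Prod.ext (hq.involutive _ _ _) (hr.involutive _ _ _)

theorem of_add_self_eq_zero {V : Type*} [AddCommGroup V] (hV : ∀ a : V, a + a = 0) :
    IsSteinerSkein fun a b c : V => a + b + c where
  swap_left a b c := by rw [add_comm a]
  swap_right a b c := add_right_comm a b c
  self_left a b := by rw [hV, zero_add]
  involutive a b c := by rw [← add_assoc, hV, zero_add]

section Blocks

variable [DecidableEq α]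

theorem exists_skeinQuadruple_eq_insert (h : IsSteinerSkein q) (hab : a ≠ b) (hac : a ≠ c)
    (hbc : b ≠ c) (hp : p ∈ skeinQuadruple q a b c) :
    ∃ y z, p ≠ y ∧ p ≠ z ∧ y ≠ z ∧ skeinQuadruple q a b c = skeinQuadruple q p y z := by
  simp only [skeinQuadruple, loopTriple, mem_insert, mem_singleton] at hp ⊢
  rcases hp with rfl | rfl | rfl | rfl
  · exact ⟨b, c, hab, hac, hbc, rfl⟩
  · refine ⟨a, c, hab.symm, hbc, hac, ?_⟩
    rw [h.swap_left, insert_comm]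
  · refine ⟨a, b, hac.symm, hbc.symm, hab, ?_⟩
    rw [h.swap_left p a b, h.swap_right a p b]
    grind
  · refine ⟨a, b, (h.loop a).op_ne_id hbc, (h.loop a).op_ne_left hac.symm, hab, ?_⟩
    rw [h.swap_left _ a b, h.swap_right a _ b, h.involutive]
    grind

theorem skeinQuadruple_eq_of_mem (h : IsSteinerSkein q) (hab : a ≠ b) (hac : a ≠ c) (hbc : b ≠ c)
    (hxy : x ≠ y) (hxz : x ≠ z) (hyz : y ≠ z) (hx : x ∈ skeinQuadruple q a b c)
    (hy : y ∈ skeinQuadruple q a b c) (hz : z ∈ skeinQuadruple q a b c) :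
    skeinQuadruple q x y z = skeinQuadruple q a b c := by
  obtain ⟨b', c', -, -, -, heq⟩ := h.exists_skeinQuadruple_eq_insert hab hac hbc hx
  rw [heq] at hy hz ⊢
  rw [skeinQuadruple, (h.loop x).loopTriple_eq_of_mem hyz (mem_of_mem_insert_of_ne hy hxy.symm)
    (mem_of_mem_insert_of_ne hz hxz.symm), skeinQuadruple]

theorem card_skeinQuadruple (h : IsSteinerSkein q) (hab : a ≠ b) (hac : a ≠ c) (hbc : b ≠ c) :
    (skeinQuadruple q a b c).card = 4 := by
  rw [skeinQuadruple,
    card_insert_of_notMem ((h.loop a).id_notMem_loopTriple hab.symm hac.symm hbc),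
    (h.loop a).card_loopTriple hab.symm hac.symm hbc]

variable [Fintype α] {f : α ↪ ℕ}

theorem isSteiner_skeinBlocks (h : IsSteinerSkein q) (f : α ↪ ℕ) :
    IsSteiner 3 4 (Fintype.card α) (univ.map f) (skeinBlocks q f) := by
  refine ⟨card_map f, fun S hS => ?_, fun T hT hT3 => ?_⟩
  · obtain ⟨a, b, c, hab, hac, hbc, rfl⟩ := mem_skeinBlocks.1 hS
    exact ⟨map_subset_map.2 (subset_univ _), by rw [card_map, h.card_skeinQuadruple hab hac hbc]⟩
  · obtain ⟨t, -, rfl⟩ := subset_map_iff.1 hT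
    rw [card_map, card_eq_three] at hT3
    obtain ⟨x, y, z, hxy, hxz, hyz, rfl⟩ := hT3
    refine ⟨(skeinQuadruple q x y z).map f,
      ⟨mem_skeinBlocks.2 ⟨x, y, z, hxy, hxz, hyz, rfl⟩, map_subset_map.2 ?_⟩, ?_⟩
    · simp [insert_subset_iff, skeinQuadruple, loopTriple]
    · rintro _ ⟨hS, hTS⟩
      obtain ⟨a, b, c, hab, hac, hbc, rfl⟩ := mem_skeinBlocks.1 hS
      simp only [map_subset_map, insert_subset_iff, singleton_subset_iff] at hTS
      obtain ⟨hx, hy, hz⟩ := hTS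
      rw [h.skeinQuadruple_eq_of_mem hab hac hbc hxy hxz hyz hx hy hz]

theorem derivedBlocks_skeinBlocks (h : IsSteinerSkein q) (p : α) :
    derivedBlocks (skeinBlocks q f) (f p) = loopBlocks (q p) p f := by
  have erase_quadruple {y z} (hy : p ≠ y) (hz : p ≠ z) (hyz : y ≠ z) :
      ((skeinQuadruple q p y z).map f).erase (f p) = (loopTriple (q p) y z).map f := by
    rw [← map_erase, skeinQuadruple,
      erase_insert ((h.loop p).id_notMem_loopTriple hy.symm hz.symm hyz)]
  ext T
  simp only [derivedBlocks, mem_image, mem_filter, mem_loopBlocks]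
  constructor
  · rintro ⟨S, ⟨hS, hp⟩, rfl⟩
    obtain ⟨a, b, c, hab, hac, hbc, rfl⟩ := mem_skeinBlocks.1 hS
    rw [mem_map'] at hp
    obtain ⟨y, z, hy, hz, hyz, heq⟩ := h.exists_skeinQuadruple_eq_insert hab hac hbc hp
    exact ⟨y, z, hy.symm, hz.symm, hyz, by rw [heq, erase_quadruple hy hz hyz]⟩
  · rintro ⟨y, z, hy, hz, hyz, rfl⟩
    exact ⟨_, ⟨mem_skeinBlocks.2 ⟨p, y, z, hy.symm, hz.symm, hyz, rfl⟩, by simp [skeinQuadruple]⟩,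
      erase_quadruple hy.symm hz.symm hyz⟩

end Blocks

theorem existsRDSQS [Finite α] [Finite ι] (h : IsSteinerSkein q)
    (hcard : 2 * Nat.card ι + 2 = Nat.card α)
    (hcol : ∀ p, ∃ col : α → α → ι, IsKirkmanColouring (q p) p col) :
    ExistsRDSQS (Nat.card α) := by
  classical
  have := Fintype.ofFinite α
  have := Fintype.ofFinite ι
  simp only [Nat.card_eq_fintype_card] at hcard ⊢
  let f : α ↪ ℕ := (Fintype.equivFin α).toEmbedding.trans Fin.valEmbedding
  refine ⟨univ.map f, skeinBlocks q f, h.isSteiner_skeinBlocks f, fun x hx => ?_⟩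
  obtain ⟨p, -, rfl⟩ := mem_map.1 hx
  obtain ⟨col, hcol⟩ := hcol p
  rw [h.derivedBlocks_skeinBlocks, ← map_erase]
  exact hcol.resolvable_loopBlocks (h.loop p) hcard

end IsSteinerSkein

/-- `d` completes `a`, `b`, `c` in the quadruple system `B`, where `{a, a, b, b}` counts as a
degenerate quadruple. The relation is symmetric in its four arguments. -/
def Completes (B : Finset (Finset ℕ)) (a b c d : ℕ) : Prop :=
  a = b ∧ c = d ∨ a = c ∧ b = d ∨ a = d ∧ b = c ∨ {a, b, c, d} ∈ B

theorem completes_swap_left {B : Finset (Finset ℕ)} {a b c d : ℕ} :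
    Completes B a b c d ↔ Completes B b a c d := by
  rw [Completes, Completes, insert_comm]
  grind

theorem completes_swap_middle {B : Finset (Finset ℕ)} {a b c d : ℕ} :
    Completes B a b c d ↔ Completes B a c b d := by
  rw [Completes, Completes, insert_comm b]
  grind

theorem completes_swap_right {B : Finset (Finset ℕ)} {a b c d : ℕ} :
    Completes B a b c d ↔ Completes B a b d c := by
  rw [Completes, Completes, pair_comm]
  grind

section SteinerQuadrupleSystem

variable {v : ℕ} {X : Finset ℕ} {B : Finset (Finset ℕ)}

theorem exists_completes (hB : IsSteiner 3 4 v X B) {a b c : ℕ} (ha : a ∈ X) (hb : b ∈ X)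
    (hc : c ∈ X) : ∃ d ∈ X, Completes B a b c d := by
  by_cases hab : a = b
  · exact ⟨c, hc, .inl ⟨hab, rfl⟩⟩
  by_cases hac : a = c
  · exact ⟨b, hb, .inr (.inl ⟨hac, rfl⟩)⟩
  by_cases hbc : b = c
  · exact ⟨a, ha, .inr (.inr (.inl ⟨rfl, hbc⟩))⟩
  have hcard : ({a, b, c} : Finset ℕ).card = 3 := card_eq_three.2 ⟨a, b, c, hab, hac, hbc, rfl⟩
  obtain ⟨S, ⟨hS, habc⟩, -⟩ := hB.2.2 {a, b, c} (by grind) hcard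
  obtain ⟨d, -, hdS⟩ := exists_eq_insert_iff.2 ⟨habc, by rw [hcard, (hB.2.1 S hS).2]⟩
  refine ⟨d, (hB.2.1 S hS).1 (hdS ▸ mem_insert_self d _), .inr (.inr (.inr ?_))⟩
  convert hS using 1
  grind

theorem pairwise_ne_of_quadruple_mem (hB : IsSteiner 3 4 v X B) {a b c d : ℕ}
    (hS : {a, b, c, d} ∈ B) :
    a ≠ b ∧ a ≠ c ∧ a ≠ d ∧ b ≠ c ∧ b ≠ d ∧ c ≠ d := by
  have hcard := (hB.2.1 _ hS).2
  grind [card_le_three]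

theorem Completes.unique (hB : IsSteiner 3 4 v X B) {a b c d d' : ℕ} (hd : Completes B a b c d)
    (hd' : Completes B a b c d') : d = d' := by
  by_cases habc : a ≠ b ∧ a ≠ c ∧ b ≠ c
  · obtain ⟨hab, hac, hbc⟩ := habc
    have hS : {a, b, c, d} ∈ B := by simpa [Completes, hab, hac, hbc] using hd
    have hS' : {a, b, c, d'} ∈ B := by simpa [Completes, hab, hac, hbc] using hd'
    have triple_subset (e : ℕ) : ({a, b, c} : Finset ℕ) ⊆ {a, b, c, e} := by grind
    have heq : ({a, b, c, d} : Finset ℕ) = {a, b, c, d'} :=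
      (hB.2.2 {a, b, c} ((triple_subset d).trans (hB.2.1 _ hS).1)
        (card_eq_three.2 ⟨a, b, c, hab, hac, hbc, rfl⟩)).unique
        ⟨hS, triple_subset d⟩ ⟨hS', triple_subset d'⟩
    have hmem : d ∈ ({a, b, c, d'} : Finset ℕ) := heq ▸ by simp
    grind [pairwise_ne_of_quadruple_mem hB hS]
  · have hS := @pairwise_ne_of_quadruple_mem _ _ _ hB a b c
    grind [Completes]

theorem exists_isSteinerSkein (hB : IsSteiner 3 4 v X B) :
    ∃ q : X → X → X → X, IsSteinerSkein q ∧
      skeinBlocks q (Function.Embedding.subtype (· ∈ X)) = B := by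
  have hq (a b c : X) : ∃ d : X, Completes B a b c d := by
    obtain ⟨d, hd, hd'⟩ := exists_completes hB a.2 b.2 c.2
    exact ⟨⟨d, hd⟩, hd'⟩
  choose q hq using hq
  have eq_of_completes {a b c d : X} (h : Completes B a b c d) : q a b c = d :=
    Subtype.ext ((hq a b c).unique hB h)
  have map_quadruple (a b c : X) : (skeinQuadruple q a b c).map (.subtype _) =
      {(a : ℕ), (b : ℕ), (c : ℕ), (q a b c : ℕ)} := by
    simp [skeinQuadruple, loopTriple]
  refine ⟨q, ⟨fun a b c => ?_, fun a b c => ?_, fun a b => ?_, fun a b c => ?_⟩, ?_⟩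
  · exact eq_of_completes (completes_swap_left.1 (hq b a c))
  · exact eq_of_completes (completes_swap_middle.1 (hq a c b))
  · exact eq_of_completes (.inl ⟨rfl, rfl⟩)
  · exact eq_of_completes (completes_swap_right.1 (hq a b c))
  ext S
  simp only [mem_skeinBlocks, map_quadruple]
  constructor
  · rintro ⟨a, b, c, hab, hac, hbc, rfl⟩
    simpa [Completes, hab, hac, hbc, Subtype.coe_inj] using hq a b c
  · intro hS
    obtain ⟨hSX, hS4⟩ := hB.2.1 S hS
    obtain ⟨a, b, c, d, hab, hac, -, hbc, -, -, rfl⟩ := card_eq_four.1 hS4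
    simp only [insert_subset_iff, singleton_subset_iff] at hSX
    obtain ⟨ha, hb, hc, hd⟩ := hSX
    have hqd : q ⟨a, ha⟩ ⟨b, hb⟩ ⟨c, hc⟩ = ⟨d, hd⟩ := eq_of_completes (.inr (.inr (.inr hS)))
    exact ⟨⟨a, ha⟩, ⟨b, hb⟩, ⟨c, hc⟩, by simpa using hab, by simpa using hac, by simpa using hbc,
      by rw [hqd]⟩

end SteinerQuadrupleSystem

section ProjectiveSpace

variable {F : Type*} [Field F] [Algebra (ZMod 2) F]

/-- The colour of the line through two points of `PG(3, 2)`, with homogeneous coordinates in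
`ZMod 2 × F` for `F` the field with eight elements. The line has Plücker coordinates
`m = s b + t a` and `n = a b (a + b)`, and `m + n ^ 5` enumerates the seven spreads of a packing
of `PG(3, 2)`. -/
def pluckerColour (p q : ZMod 2 × F) : F :=
  p.1 • q.2 + q.1 • p.2 + (p.2 * q.2 * (p.2 + q.2)) ^ 5

theorem pluckerColour_comm (p q : ZMod 2 × F) : pluckerColour p q = pluckerColour q p := by
  simp only [pluckerColour, Algebra.smul_def]
  ring

theorem pluckerColour_add_right (p q : ZMod 2 × F) :
    pluckerColour p (p + q) = pluckerColour p q := by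
  have : CharP F 2 := charP_of_injective_algebraMap' (ZMod 2) 2
  have add_add_self : p.2 + (p.2 + q.2) = q.2 := by
    rw [← add_assoc, CharTwo.add_self_eq_zero, zero_add]
  simp only [pluckerColour, Prod.fst_add, Prod.snd_add, smul_add, add_smul, add_add_self]
  linear_combination CharTwo.add_self_eq_zero (p.1 • p.2)

theorem add_sq_pow_five (hF : ∀ x : F, x ^ 8 = x) {b : F} (hb₀ : b ≠ 0) (hb₁ : b ≠ 1) :
    (b + b ^ 2) ^ 5 = 1 + b + b ^ 4 := by
  have : CharP F 2 := charP_of_injective_algebraMap' (ZMod 2) 2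
  have two_eq_zero : (2 : F) = 0 := CharTwo.two_eq_zero
  have hb₇ : b ^ 7 = 1 := mul_left_cancel₀ hb₀ (by linear_combination hF b)
  have geom_sum : 1 + b + b ^ 2 + b ^ 3 + b ^ 4 + b ^ 5 + b ^ 6 = 0 :=
    mul_left_cancel₀ (sub_ne_zero.2 hb₁) (by linear_combination hb₇)
  linear_combination (b ^ 2 + b ^ 3) * hb₇ + geom_sum +
    (2 * b ^ 6 + 5 * b ^ 7 + 5 * b ^ 8 + 2 * b ^ 9 - 1 - b - b ^ 4) * two_eq_zero

theorem exists_add_add_sq_pow_five_eq (hF : ∀ x : F, x ^ 8 = x) (d : F) :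
    ∃ b : F, b + (b + b ^ 2) ^ 5 = d := by
  have : CharP F 2 := charP_of_injective_algebraMap' (ZMod 2) 2
  have two_eq_zero : (2 : F) = 0 := CharTwo.two_eq_zero
  by_cases hd₀ : d = 0
  · exact ⟨0, by simp [hd₀]⟩
  by_cases hd₁ : d = 1
  · exact ⟨1, by linear_combination 16 * two_eq_zero - hd₁⟩
  have hb₀ : 1 + d ^ 2 ≠ 0 := fun h =>
    hd₁ (CharTwo.sq_injective (by linear_combination h - two_eq_zero))
  have hb₁ : 1 + d ^ 2 ≠ 1 := by simpa using hd₀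
  refine ⟨1 + d ^ 2, ?_⟩
  rw [add_sq_pow_five hF hb₀ hb₁]
  linear_combination hF d + (2 + 3 * d ^ 2 + 3 * d ^ 4 + 2 * d ^ 6) * two_eq_zero

theorem exists_algebraMap_add_add_sq_pow_five_eq (hF : ∀ x : F, x ^ 8 = x) (d : F) :
    ∃ (t : ZMod 2) (b : F), algebraMap (ZMod 2) F t + (b + b ^ 2) ^ 5 = d := by
  have : CharP F 2 := charP_of_injective_algebraMap' (ZMod 2) 2
  have two_eq_zero : (2 : F) = 0 := CharTwo.two_eq_zero
  by_cases hd₀ : d = 0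
  · exact ⟨0, 0, by simp [hd₀]⟩
  by_cases hd₁ : d = 1
  · exact ⟨1, 0, by simp [hd₁]⟩
  have hb₁ : d ^ 4 ≠ 1 := fun h => hd₁ (by linear_combination (d ^ 4 + 1) * h - hF d)
  have pow_five_eq : (d ^ 4 + (d ^ 4) ^ 2) ^ 5 = 1 + d ^ 4 + d ^ 2 := by
    rw [add_sq_pow_five hF (pow_ne_zero 4 hd₀) hb₁]
    linear_combination d ^ 8 * hF d + d * hF d
  obtain ⟨t, ht⟩ : ∃ t, algebraMap (ZMod 2) F t = 1 + d + d ^ 2 + d ^ 4 := by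
    have trace_idem : (d + d ^ 2 + d ^ 4) * (1 + d + d ^ 2 + d ^ 4) = 0 := by
      linear_combination hF d + (d + d ^ 2 + d ^ 3 + d ^ 4 + d ^ 5 + d ^ 6) * two_eq_zero
    rcases mul_eq_zero.1 trace_idem with htr | htr
    · exact ⟨1, by rw [map_one]; linear_combination -htr⟩
    · exact ⟨0, by rw [map_zero, htr]⟩
  refine ⟨t, d ^ 4, ?_⟩
  rw [ht, pow_five_eq]
  linear_combination (1 + d ^ 2 + d ^ 4) * two_eq_zero

theorem exists_pluckerColour_eq (hF : ∀ x : F, x ^ 8 = x) {p : ZMod 2 × F} (hp : p ≠ 0) (c : F) :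
    ∃ q, pluckerColour p q = c := by
  obtain ⟨s, a⟩ := p
  have eq_one : s ≠ 0 → s = 1 := Fin.eq_one_of_ne_zero s
  by_cases ha : a = 0
  · have hs : s = 1 := eq_one fun hs => hp (by rw [hs, ha, Prod.mk_zero_zero])
    exact ⟨(0, c), by simp [pluckerColour, hs, ha]⟩
  have colour_scale (t : ZMod 2) (b : F) : pluckerColour (s, a) (t, a * b) =
      a * (algebraMap (ZMod 2) F s * b + algebraMap (ZMod 2) F t + (b + b ^ 2) ^ 5) := by
    simp only [pluckerColour, Algebra.smul_def]
    linear_combination a ^ 7 * (b + b ^ 2) ^ 5 * hF a + (b + b ^ 2) ^ 5 * hF a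
  by_cases hs : s = 0
  · obtain ⟨t, b, htb⟩ := exists_algebraMap_add_add_sq_pow_five_eq hF (c / a)
    refine ⟨(t, a * b), ?_⟩
    rw [colour_scale, hs, map_zero, zero_mul, zero_add, htb, mul_div_cancel₀ c ha]
  · obtain ⟨b, hb⟩ := exists_add_add_sq_pow_five_eq hF (c / a)
    refine ⟨(0, a * b), ?_⟩
    rw [colour_scale, eq_one hs, map_one, map_zero, one_mul, add_zero, hb,
      mul_div_cancel₀ c ha]

theorem isKirkmanColouring_pluckerColour {ι : Type*} (hF : ∀ x : F, x ^ 8 = x) {g : F → ι}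
    (hg : ∀ i, ∃ x, x ≠ 0 ∧ g x = i) :
    IsKirkmanColouring (· + ·) 0 fun p q : ZMod 2 × F => g (pluckerColour p q) where
  comm p q := congrArg g (pluckerColour_comm p q)
  op_right p q := congrArg g (pluckerColour_add_right p q)
  exists_eq p hp i := by
    have colour_zero : pluckerColour p 0 = 0 := by simp [pluckerColour]
    have colour_self : pluckerColour p p = 0 := by
      simpa only [add_zero, colour_zero] using pluckerColour_add_right p 0
    obtain ⟨x, hx, rfl⟩ := hg i
    obtain ⟨q, rfl⟩ := exists_pluckerColour_eq hF hp x
    refine ⟨q, ?_, ?_, rfl⟩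
    · rintro rfl
      exact hx colour_zero
    · rintro rfl
      exact hx colour_self

end ProjectiveSpace

theorem exists_surjOn_ne_apply_eq {β ι : Type*} [Finite β] [Finite ι]
    (hcard : Nat.card ι + 1 = Nat.card β) (z y : β) (c : ι) :
    ∃ g : β → ι, (∀ i, ∃ x, x ≠ z ∧ g x = i) ∧ g y = c := by
  classical
  have card_ne : Nat.card {x // x ≠ z} = Nat.card ι := by
    have := Fintype.ofFinite β
    rw [Nat.card_eq_fintype_card, Fintype.card_subtype_compl, Fintype.card_subtype_eq,
      ← Nat.card_eq_fintype_card, ← hcard, Nat.add_sub_cancel]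
  obtain ⟨e⟩ : Nonempty ({x // x ≠ z} ≃ ι) := Finite.card_eq.1 card_ne
  obtain ⟨e, he⟩ : ∃ e : {x // x ≠ z} ≃ ι, ∀ hy : y ≠ z, e ⟨y, hy⟩ = c := by
    by_cases hy : y = z
    · exact ⟨e, fun h => absurd hy h⟩
    · exact ⟨e.setValue ⟨y, hy⟩ c, fun _ => e.setValue_eq _ _⟩
  refine ⟨fun x => if hx : x = z then c else e ⟨x, hx⟩, fun i => ?_, ?_⟩
  · exact ⟨e.symm i, (e.symm i).2, by simp [(e.symm i).2]⟩
  · grind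

theorem exists_isKirkmanColouring_add {W ι : Type*} [AddCommGroup W] (hW : ∀ w : W, w + w = 0)
    (hcard : Nat.card W = 16) (hι : Nat.card ι = 7) (u v : W) (c : ι) :
    ∃ col : W → W → ι, IsKirkmanColouring (· + ·) 0 col ∧ col u v = c := by
  let F := GaloisField 2 3
  have card_F : Nat.card F = 8 := GaloisField.card 2 3 (by norm_num)
  have hF (x : F) : x ^ 8 = x := by
    have := Fintype.ofFinite F
    rw [← card_F, Nat.card_eq_fintype_card, FiniteField.pow_card]
  have : Finite ι := Nat.finite_of_card_ne_zero (by rw [hι]; norm_num)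
  have : Finite W := Nat.finite_of_card_ne_zero (by rw [hcard]; norm_num)
  let : Module (ZMod 2) W := AddCommGroup.zmodModule fun w => by rw [two_nsmul, hW]
  have finrank_W : Module.finrank (ZMod 2) W = 4 := by
    have := Fintype.ofFinite W
    have hpow := Module.card_eq_pow_finrank (K := ZMod 2) (V := W)
    rw [← Nat.card_eq_fintype_card, hcard, ZMod.card] at hpow
    exact Nat.pow_right_injective le_rfl hpow.symm
  have finrank_F : Module.finrank (ZMod 2) (ZMod 2 × F) = 4 := by
    rw [Module.finrank_prod, Module.finrank_self, GaloisField.finrank 2 (by norm_num)]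
  obtain ⟨σ⟩ : Nonempty (W ≃ₗ[ZMod 2] ZMod 2 × F) :=
    FiniteDimensional.nonempty_linearEquiv_of_finrank_eq (finrank_W.trans finrank_F.symm)
  obtain ⟨g, hg, hguv⟩ := exists_surjOn_ne_apply_eq (by rw [hι, card_F]) 0
    (pluckerColour (σ u) (σ v)) c
  exact ⟨_, (isKirkmanColouring_pluckerColour hF hg).comp σ.toEquiv (map_add σ) (map_zero σ), hguv⟩

theorem IsSteinerLoop.of_add_self_eq_zero {V : Type*} [AddCommGroup V] (hV : ∀ a : V, a + a = 0) :
    IsSteinerLoop (· + ·) (0 : V) where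
  comm := add_comm
  id_op := zero_add
  op_op a b := by rw [← add_assoc, hV, zero_add]

section KleinFour

variable {K : Type*}

theorem exists_ne_and_ne [AddGroup K] [IsAddKleinFour K] (a b : K) : ∃ c, c ≠ a ∧ c ≠ b := by
  classical
  have : Finite K := IsAddKleinFour.instFinite
  have := Fintype.ofFinite K
  have hcard : ({a, b} : Finset K).card < (univ : Finset K).card := by
    rw [card_univ, IsAddKleinFour.card_four']
    exact card_le_two.trans_lt (by norm_num)
  obtain ⟨c, -, hc⟩ := exists_mem_notMem_of_card_lt_card hcard
  exact ⟨c, by simpa using hc⟩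

theorem exists_packing [Field K] [IsAddKleinFour K] {κ : Type*} (hκ : Nat.card κ = 6) :
    ∃ pack : K × K → K × K → Option κ, IsKirkmanColouring (· + ·) 0 pack ∧
      ∀ i j, i ≠ 0 → j ≠ 0 → i ≠ j → pack (0, i) (0, j) = none := by
  classical
  have hK (w : K × K) : w + w = 0 :=
    Prod.ext (IsAddKleinFour.add_self _) (IsAddKleinFour.add_self _)
  have : Finite κ := Nat.finite_of_card_ne_zero (by rw [hκ]; norm_num)
  obtain ⟨i₀, hi₀, hi₁⟩ := exists_ne_and_ne (0 : K) 1
  obtain ⟨pack, hpack, hpack₀⟩ := exists_isKirkmanColouring_add hK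
    (by rw [Nat.card_prod, IsAddKleinFour.card_four])
    (by rw [Finite.card_option, hκ]) (0, 1) (0, i₀) (none : Option κ)
  refine ⟨pack, hpack, fun i j hi hj hij => ?_⟩
  have mem_line (k : K) (hk : k ≠ 0) : ((0, k) : K × K) ∈ loopTriple (· + ·) (0, 1) (0, i₀) := by
    have := @IsAddKleinFour.eq_add_of_ne_all K _ _ 1 i₀ k one_ne_zero hi₀ hi₁.symm hk
    simp only [loopTriple, mem_insert, mem_singleton, Prod.mk_add_mk, Prod.mk.injEq, add_zero,
      true_and]
    tauto
  rw [← hpack₀]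
  exact (IsSteinerLoop.of_add_self_eq_zero hK).eq_of_mem_loopTriple hpack.comm hpack.op_right
    (by simpa using hij) (mem_line i hi) (mem_line j hj)

theorem exists_bijOn_compl_zero_of_card_eq_three [AddGroup K] [IsAddKleinFour K] {α : Type*} :
    ∃ label : Finset α → α → K, ∀ T, T.card = 3 → Set.BijOn (label T) T {0}ᶜ := by
  have : Finite K := IsAddKleinFour.instFinite
  have exists_bijOn (T : Finset α) (hT : T.card = 3) :
      ∃ l : α → K, Set.BijOn l T {0}ᶜ := by
    refine T.finite_toSet.exists_bijOn_of_encard_eq ?_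
    rw [Set.encard_coe_eq_coe_finsetCard, hT, ← (Set.toFinite {0}ᶜ).cast_ncard_eq,
      Set.ncard_compl, Set.ncard_singleton, IsAddKleinFour.card_four]
  choose! label hlabel using exists_bijOn
  exact ⟨label, hlabel⟩

theorem IsSteinerLoop.label_op [AddGroup K] [IsAddKleinFour K] {α : Type*} [DecidableEq α]
    {op : α → α → α} {e y z : α} (h : IsSteinerLoop op e) {l : α → K}
    (hl : Set.BijOn l (loopTriple op y z) {0}ᶜ) (hy : y ≠ e) (hz : z ≠ e) (hyz : y ≠ z) :
    l (op y z) = l y + l z := by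
  have mem_y : y ∈ loopTriple op y z := by simp [loopTriple]
  have mem_z : z ∈ loopTriple op y z := by simp [loopTriple]
  have mem_op : op y z ∈ loopTriple op y z := by simp [loopTriple]
  exact IsAddKleinFour.eq_add_of_ne_all (hl.mapsTo mem_y) (hl.mapsTo mem_z)
    (hl.injOn.ne mem_y mem_z hyz) (hl.mapsTo mem_op)
    (hl.injOn.ne mem_op mem_y (h.op_ne_left hz)) (hl.injOn.ne mem_op mem_z (h.op_ne_right hy))

end KleinFour

/-- Coordinates on a Steiner loop for lifting it to its product with `K`. The points other than `e`
fall into groups indexed by `ι`, each of which together with `e` is a copy of `K` via `coord`; and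
`share T` distributes colours of `ι × κ` over the elements of `K` for each triple `T` that is not a
group, in such a way that a point outside the group `k` meets every colour `(k, c)`. -/
structure IsStarFrame {α K ι κ : Type*} [DecidableEq α] [AddGroup K] (op : α → α → α) (e : α)
    (index : α → Option ι) (coord : α → K) (share : Finset α → K → Option (ι × κ)) : Prop where
  index_eq_none : ∀ y, index y = none ↔ y = e
  coord_eq_zero : ∀ y, coord y = 0 ↔ y = e
  index_op : ∀ y z, y ≠ e → y ≠ z → index y = index z → index (op y z) = index y
  coord_op : ∀ y z, y ≠ e → y ≠ z → index y = index z → coord (op y z) = coord y + coord z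
  exists_coord_eq : ∀ k u, u ≠ 0 → ∃ z, index z = some k ∧ coord z = u
  exists_share_eq : ∀ y k, y ≠ e → index y ≠ some k → ∀ c, ∃ z, z ≠ e ∧ index y ≠ index z ∧
    ∃ t, share (loopTriple op y z) t = some (k, c)

/-- The points `y` and `z` are equal to the identity or in the same group of the frame. -/
def InGroup {α ι : Type*} (e : α) (index : α → Option ι) (y z : α) : Prop :=
  y = e ∨ z = e ∨ index y = index z

open Classical in
/-- The colouring of `α × K` glued from the packing `pack` on the copies of `K × K` lying over the
groups together with the identity, and from the `2 × 2` determinants over the remaining triples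
`T`, whose points are labelled by the non-zero elements of `K`. The colour `none` is common to all
groups. -/
noncomputable def gluedColour {α K ι κ : Type*} [DecidableEq α] [Field K] (op : α → α → α)
    (e : α) (index : α → Option ι) (coord : α → K) (share : Finset α → K → Option (ι × κ))
    (pack : K × K → K × K → Option κ) (label : Finset α → α → K) (p q : α × K) :
    Option (ι × κ) :=
  if InGroup e index p.1 q.1 then
    Option.map₂ Prod.mk (index p.1 <|> index q.1) (pack (coord p.1, p.2) (coord q.1, q.2))
  else
    let T := loopTriple op p.1 q.1
    share T (label T p.1 * q.2 + label T q.1 * p.2)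

section GluedColour

variable {α K ι κ : Type*} [DecidableEq α] [Field K] {op : α → α → α} {e : α}
  {index : α → Option ι} {coord : α → K} {share : Finset α → K → Option (ι × κ)}
  {pack : K × K → K × K → Option κ} {label : Finset α → α → K} {p q : α × K}

theorem gluedColour_of_inGroup (hpq : InGroup e index p.1 q.1) :
    gluedColour op e index coord share pack label p q =
      Option.map₂ Prod.mk (index p.1 <|> index q.1) (pack (coord p.1, p.2) (coord q.1, q.2)) :=
  if_pos hpq

theorem gluedColour_of_not_inGroup (hpq : ¬InGroup e index p.1 q.1) :
    gluedColour op e index coord share pack label p q = share (loopTriple op p.1 q.1)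
      (label (loopTriple op p.1 q.1) p.1 * q.2 + label (loopTriple op p.1 q.1) q.1 * p.2) :=
  if_neg hpq

end GluedColour

namespace IsStarFrame

variable {α K ι κ : Type*} [DecidableEq α] {op : α → α → α} {e : α} {index : α → Option ι}
  {coord : α → K} {share : Finset α → K → Option (ι × κ)} {y z : α}

section AddGroup

variable [AddGroup K]

theorem index_id (hfr : IsStarFrame op e index coord share) : index e = none :=
  (hfr.index_eq_none e).2 rfl

theorem coord_id (hfr : IsStarFrame op e index coord share) : coord e = 0 :=
  (hfr.coord_eq_zero e).2 rfl

theorem inGroup_op (h : IsSteinerLoop op e) (hfr : IsStarFrame op e index coord share)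
    (hyz : InGroup e index y z) : InGroup e index y (op y z) := by
  by_cases hy : y = e
  · exact .inl hy
  rcases hyz with rfl | rfl | hidx
  · exact .inl rfl
  · exact .inr (.inr (by rw [h.op_id]))
  · by_cases hyz : y = z
    · exact .inr (.inl (by rw [hyz, h.op_self]))
    · exact .inr (.inr (hfr.index_op y z hy hyz hidx).symm)

theorem inGroup_op_iff (h : IsSteinerLoop op e) (hfr : IsStarFrame op e index coord share) :
    InGroup e index y (op y z) ↔ InGroup e index y z :=
  ⟨fun hyz => h.op_op y z ▸ hfr.inGroup_op h hyz, hfr.inGroup_op h⟩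

theorem orElse_index_comm (hfr : IsStarFrame op e index coord share)
    (hyz : InGroup e index y z) : (index y <|> index z) = (index z <|> index y) := by
  rcases hyz with rfl | rfl | hidx
  · simp [hfr.index_id]
  · simp [hfr.index_id]
  · rw [hidx]

theorem orElse_index_op (h : IsSteinerLoop op e) (hfr : IsStarFrame op e index coord share) :
    (index y <|> index (op y z)) = (index y <|> index z) := by
  by_cases hy : y = e
  · rw [hy, h.id_op]
  · obtain ⟨k, hk⟩ := Option.ne_none_iff_exists'.1 (mt (hfr.index_eq_none y).1 hy)
    simp [hk]

theorem coord_op_of_inGroup [IsAddKleinFour K] (h : IsSteinerLoop op e)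
    (hfr : IsStarFrame op e index coord share) (hyz : InGroup e index y z) :
    coord (op y z) = coord y + coord z := by
  by_cases hy : y = e
  · rw [hy, h.id_op, hfr.coord_id, zero_add]
  rcases hyz with rfl | rfl | hidx
  · exact absurd rfl hy
  · rw [h.op_id, hfr.coord_id, add_zero]
  · by_cases hyz : y = z
    · rw [hyz, h.op_self, hfr.coord_id, IsAddKleinFour.add_self]
    · exact hfr.coord_op y z hy hyz hidx

end AddGroup

variable [Field K] {pack : K × K → K × K → Option κ} {label : Finset α → α → K}

theorem gluedColour_comm (h : IsSteinerLoop op e) (hfr : IsStarFrame op e index coord share)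
    (hpack : IsKirkmanColouring (· + ·) 0 pack) (p q : α × K) :
    gluedColour op e index coord share pack label p q =
      gluedColour op e index coord share pack label q p := by
  have inGroup_comm : InGroup e index p.1 q.1 ↔ InGroup e index q.1 p.1 := by
    rw [InGroup, InGroup, eq_comm (a := index p.1)]
    tauto
  by_cases hpq : InGroup e index p.1 q.1
  · rw [gluedColour_of_inGroup hpq, gluedColour_of_inGroup (inGroup_comm.1 hpq),
      hfr.orElse_index_comm hpq, hpack.comm]
  · rw [gluedColour_of_not_inGroup hpq, gluedColour_of_not_inGroup (mt inGroup_comm.2 hpq),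
      h.loopTriple_comm, add_comm]

theorem exists_gluedColour_eq_of_packing (hfr : IsStarFrame op e index coord share)
    (hpack : IsKirkmanColouring (· + ·) 0 pack) {k : ι} (hy : index y = some k)
    (j : K) (c : Option κ) : ∃ q, q ≠ (e, 0) ∧ (y, j) ≠ q ∧
      gluedColour op e index coord share pack label (y, j) q = c.map (Prod.mk k) := by
  have hye : y ≠ e := by
    rintro rfl
    simp [hfr.index_id] at hy
  obtain ⟨⟨u, m⟩, hum, hjum, hc⟩ := hpack.exists_eq (coord y, j)
    (fun hzero => hye ((hfr.coord_eq_zero y).1 (congrArg Prod.fst hzero))) c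
  obtain ⟨z, rfl, hz⟩ : ∃ z, coord z = u ∧ (z = e ∨ index z = some k) := by
    by_cases hu : u = 0
    · exact ⟨e, hfr.coord_id.trans hu.symm, .inl rfl⟩
    · obtain ⟨z, hz, hzu⟩ := hfr.exists_coord_eq k u hu
      exact ⟨z, hzu, .inr hz⟩
  refine ⟨(z, m), ?_, ?_, ?_⟩
  · rintro ⟨⟩
    exact hum (by rw [hfr.coord_id, Prod.mk_zero_zero])
  · rintro ⟨⟩
    exact hjum rfl
  · have hyz : InGroup e index y z := .inr (by rwa [hy, eq_comm (a := some k)])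
    rw [gluedColour_of_inGroup hyz, hy, hc]
    simp

theorem exists_gluedColour_eq_of_share (h : IsSteinerLoop op e)
    (hfr : IsStarFrame op e index coord share)
    (hlabel : ∀ T, T.card = 3 → Set.BijOn (label T) T {0}ᶜ) (hy : y ≠ e) {k : ι}
    (hk : index y ≠ some k) (j : K) (c : κ) : ∃ q, q ≠ (e, 0) ∧ (y, j) ≠ q ∧
      gluedColour op e index coord share pack label (y, j) q = some (k, c) := by
  obtain ⟨z, hz, hidx, t, ht⟩ := hfr.exists_share_eq y k hy hk c
  have hyz : y ≠ z := fun heq => hidx (congrArg index heq)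
  have hfar : ¬ InGroup e index y z := by simp [InGroup, hy, hz, hidx]
  let T := loopTriple op y z
  have hlabel_y : label T y ≠ 0 :=
    (hlabel T (h.card_loopTriple hy hz hyz)).mapsTo (show y ∈ T by simp [T, loopTriple])
  refine ⟨(z, (t - label T z * j) / label T y), by simp [hz], by simp [hyz], ?_⟩
  rw [gluedColour_of_not_inGroup hfar, mul_div_cancel₀ _ hlabel_y, sub_add_cancel, ht]

variable [IsAddKleinFour K]

theorem exists_gluedColour_eq_of_id (hfr : IsStarFrame op e index coord share)
    (hpack : IsKirkmanColouring (· + ·) 0 pack)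
    (hpack_none : ∀ i j, i ≠ 0 → j ≠ 0 → i ≠ j → pack (0, i) (0, j) = none) {j : K} (hj : j ≠ 0)
    (c : Option (ι × κ)) : ∃ q, q ≠ (e, 0) ∧ (e, j) ≠ q ∧
      gluedColour op e index coord share pack label (e, j) q = c := by
  have colour_eq (q : α × K) : gluedColour op e index coord share pack label (e, j) q =
      Option.map₂ Prod.mk (index q.1) (pack (0, j) (coord q.1, q.2)) := by
    simp [gluedColour, InGroup, hfr.index_id, hfr.coord_id]
  rcases c with _ | ⟨k, c⟩
  · obtain ⟨m, hm, hmj⟩ := exists_ne_and_ne 0 j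
    exact ⟨(e, m), by simpa using hm, by simpa using hmj.symm, by simp [colour_eq, hfr.index_id]⟩
  · obtain ⟨⟨u, m⟩, hum, hjum, hc⟩ := hpack.exists_eq (0, j) (by simpa using hj) (some c)
    have hu : u ≠ 0 := by
      rintro rfl
      rw [hpack_none j m hj (by simpa using hum) (by simpa using hjum)] at hc
      cases hc
    obtain ⟨z, hz, rfl⟩ := hfr.exists_coord_eq k u hu
    have hze : z ≠ e := by
      rintro rfl
      simp [hfr.index_id] at hz
    exact ⟨(z, m), by simp [hze], by simp [hze.symm], by simp [colour_eq, hz, hc]⟩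

theorem gluedColour_op_right (h : IsSteinerLoop op e) (hfr : IsStarFrame op e index coord share)
    (hpack : IsKirkmanColouring (· + ·) 0 pack)
    (hlabel : ∀ T, T.card = 3 → Set.BijOn (label T) T {0}ᶜ) (p q : α × K) :
    gluedColour op e index coord share pack label p (op p.1 q.1, p.2 + q.2) =
      gluedColour op e index coord share pack label p q := by
  by_cases hpq : InGroup e index p.1 q.1
  · rw [gluedColour_of_inGroup hpq, gluedColour_of_inGroup (hfr.inGroup_op h hpq),
      hfr.orElse_index_op h, hfr.coord_op_of_inGroup h hpq]
    exact congrArg _ (hpack.op_right (coord p.1, p.2) (coord q.1, q.2))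
  · rw [gluedColour_of_not_inGroup hpq,
      gluedColour_of_not_inGroup (mt (hfr.inGroup_op_iff h).1 hpq)]
    simp only [InGroup, not_or] at hpq
    obtain ⟨hp, hq, hidx⟩ := hpq
    have hne : p.1 ≠ q.1 := fun heq => hidx (congrArg index heq)
    rw [h.loopTriple_op, h.label_op (hlabel _ (h.card_loopTriple hp hq hne)) hp hq hne]
    congr 1
    linear_combination IsAddKleinFour.add_self (label (loopTriple op p.1 q.1) p.1 * p.2)

theorem isKirkmanColouring_gluedColour (h : IsSteinerLoop op e)
    (hfr : IsStarFrame op e index coord share) (hpack : IsKirkmanColouring (· + ·) 0 pack)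
    (hpack_none : ∀ i j, i ≠ 0 → j ≠ 0 → i ≠ j → pack (0, i) (0, j) = none)
    (hlabel : ∀ T, T.card = 3 → Set.BijOn (label T) T {0}ᶜ) :
    IsKirkmanColouring (fun p q : α × K => (op p.1 q.1, p.2 + q.2)) (e, 0)
      (gluedColour op e index coord share pack label) where
  comm := hfr.gluedColour_comm h hpack
  op_right := hfr.gluedColour_op_right h hpack hlabel
  exists_eq := by
    rintro ⟨y, j⟩ hyj c
    by_cases hy : y = e
    · subst hy
      exact hfr.exists_gluedColour_eq_of_id hpack hpack_none (by simpa using hyj) c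
    obtain ⟨k₀, hk₀⟩ := Option.ne_none_iff_exists'.1 (mt (hfr.index_eq_none y).1 hy)
    rcases c with _ | ⟨k, c⟩
    · exact hfr.exists_gluedColour_eq_of_packing hpack hk₀ j none
    by_cases hk : index y = some k
    · exact hfr.exists_gluedColour_eq_of_packing hpack hk j (some c)
    · exact hfr.exists_gluedColour_eq_of_share h hlabel hy hk j c

end IsStarFrame

theorem exists_forall_mem_exists_eq_some {β γ : Type*} [Finite γ] {s : Set β} (hs : s.Finite)
    (hcard : s.ncard ≤ Nat.card γ) : ∃ g : γ → Option β, ∀ x ∈ s, ∃ t, g t = some x := by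
  have := hs.fintype
  have := Fintype.ofFinite γ
  rw [← Nat.card_coe_set_eq, Nat.card_eq_fintype_card, Nat.card_eq_fintype_card] at hcard
  obtain ⟨φ⟩ : Nonempty (s ↪ γ) := Function.Embedding.nonempty_of_card_le hcard
  refine ⟨Function.extend φ (fun x => some x.1) fun _ => none, fun x hx => ⟨φ ⟨x, hx⟩, ?_⟩⟩
  rw [φ.injective.extend_apply]

/-- The star condition at a point, in terms of the derived Steiner loop: `block` enumerates a
parallel class, the `cls k l` are parallel classes (only the covering of points by triples is
recorded) whose only possible `block` is `block k`, and every other triple lies in at most two of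
them. -/
structure IsStarResolution_s13 {α ι κ : Type*} [DecidableEq α] (op : α → α → α) (e : α)
    (block : ι → Finset α) (cls : ι → κ → Set (Finset α)) : Prop where
  exists_eq_block : ∀ k, ∃ a b, a ≠ e ∧ b ≠ e ∧ a ≠ b ∧ loopTriple op a b = block k
  exists_mem_block : ∀ y, y ≠ e → ∃ k, y ∈ block k
  eq_of_mem_block : ∀ y k k', y ∈ block k → y ∈ block k' → k = k'
  exists_mem_cls : ∀ y, y ≠ e → ∀ k l, ∃ z, z ≠ e ∧ y ≠ z ∧ loopTriple op y z ∈ cls k l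
  eq_of_block_mem : ∀ k' k l, block k' ∈ cls k l → k' = k
  ncard_le : ∀ T, T ∉ Set.range block → {kl : ι × κ | T ∈ cls kl.1 kl.2}.ncard ≤ 2

namespace IsStarResolution_s13

variable {α ι κ : Type*} [DecidableEq α] {op : α → α → α} {e : α} {block : ι → Finset α}
  {cls : ι → κ → Set (Finset α)}

theorem id_notMem_block (h : IsSteinerLoop op e) (hres : IsStarResolution_s13 op e block cls) (k : ι) :
    e ∉ block k := by
  obtain ⟨a, b, ha, hb, hab, heq⟩ := hres.exists_eq_block k
  exact heq ▸ h.id_notMem_loopTriple ha hb hab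

theorem card_block (h : IsSteinerLoop op e) (hres : IsStarResolution_s13 op e block cls) (k : ι) :
    (block k).card = 3 := by
  obtain ⟨a, b, ha, hb, hab, heq⟩ := hres.exists_eq_block k
  exact heq ▸ h.card_loopTriple ha hb hab

theorem loopTriple_eq_block (h : IsSteinerLoop op e) (hres : IsStarResolution_s13 op e block cls)
    {k : ι} {y z : α} (hy : y ∈ block k) (hz : z ∈ block k) (hyz : y ≠ z) :
    loopTriple op y z = block k := by
  obtain ⟨a, b, -, -, -, heq⟩ := hres.exists_eq_block k
  rw [← heq] at hy hz ⊢
  exact h.loopTriple_eq_of_mem hyz hy hz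

theorem exists_index (h : IsSteinerLoop op e) (hres : IsStarResolution_s13 op e block cls) :
    ∃ index : α → Option ι, (∀ y, index y = none ↔ y = e) ∧
      ∀ y k, index y = some k ↔ y ∈ block k := by
  have exists_option (y : α) :
      ∃ o : Option ι, (o = none ↔ y = e) ∧ ∀ k, o = some k ↔ y ∈ block k := by
    by_cases hy : y = e
    · subst hy
      exact ⟨none, by simp, fun k => by simpa using hres.id_notMem_block h k⟩
    · obtain ⟨k, hk⟩ := hres.exists_mem_block y hy
      refine ⟨some k, by simpa using hy, fun k' => ?_⟩
      rw [Option.some_inj]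
      exact ⟨fun heq => heq ▸ hk, hres.eq_of_mem_block y k k' hk⟩
  choose index hnone hsome using exists_option
  exact ⟨index, hnone, hsome⟩

theorem exists_coord {K : Type*} [AddGroup K] [IsAddKleinFour K] (h : IsSteinerLoop op e)
    (hres : IsStarResolution_s13 op e block cls) :
    ∃ coord : α → K, coord e = 0 ∧ ∀ k, Set.BijOn coord (block k) {0}ᶜ := by
  obtain ⟨label, hlabel⟩ := exists_bijOn_compl_zero_of_card_eq_three (K := K) (α := α)
  obtain ⟨index, hnone, hsome⟩ := hres.exists_index h
  refine ⟨fun y => (index y).elim 0 fun k => label (block k) y, by simp [(hnone e).2 rfl],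
    fun k => (hlabel _ (hres.card_block h k)).congr fun y hy => ?_⟩
  simp [(hsome y k).2 hy]

/-- A triple that is not a `block` lies in at most two classes, hence carries at most
`2 * 2 = Nat.card K` colours. -/
theorem exists_share {K : Type*} [AddGroup K] [IsAddKleinFour K] [Finite ι] [Finite κ]
    (hres : IsStarResolution_s13 op e block cls) :
    ∃ share : Finset α → K → Option (ι × κ × Fin 2), ∀ T, T ∉ Set.range block →
      ∀ k l m, T ∈ cls k l → ∃ t, share T t = some (k, l, m) := by
  have : Finite K := IsAddKleinFour.instFinite
  have exists_cover (T : Finset α) (hT : T ∉ Set.range block) :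
      ∃ g : K → Option (ι × κ × Fin 2),
        ∀ x ∈ {x : ι × κ × Fin 2 | T ∈ cls x.1 x.2.1}, ∃ t, g t = some x := by
    refine exists_forall_mem_exists_eq_some (Set.toFinite _) ?_
    calc {x : ι × κ × Fin 2 | T ∈ cls x.1 x.2.1}.ncard
        = ((Equiv.prodAssoc ι κ (Fin 2)).symm ⁻¹'
            ({kl : ι × κ | T ∈ cls kl.1 kl.2} ×ˢ Set.univ)).ncard := by
          congr 1
          ext
          simp
      _ = {kl : ι × κ | T ∈ cls kl.1 kl.2}.ncard * 2 := by
          rw [Set.ncard_preimage_of_injective_subset_range (Equiv.injective _) (by simp),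
            Set.ncard_prod, Set.ncard_univ, Nat.card_fin]
      _ ≤ Nat.card K := by
          rw [IsAddKleinFour.card_four]
          linarith [hres.ncard_le T hT]
  choose! share hshare using exists_cover
  exact ⟨share, fun T hT k l m hkl => hshare T hT (k, l, m) hkl⟩

theorem exists_isStarFrame {K : Type*} [AddGroup K] [IsAddKleinFour K] [Finite ι] [Finite κ]
    (h : IsSteinerLoop op e) (hres : IsStarResolution_s13 op e block cls) :
    ∃ (index : α → Option ι) (coord : α → K) (share : Finset α → K → Option (ι × κ × Fin 2)),
      IsStarFrame op e index coord share := by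
  obtain ⟨index, hnone, hsome⟩ := hres.exists_index h
  obtain ⟨coord, hcoord_id, hcoord⟩ := hres.exists_coord (K := K) h
  obtain ⟨share, hshare⟩ := hres.exists_share (K := K)
  have exists_block {y z} (hy : y ≠ e) (hyz : index y = index z) :
      ∃ k, y ∈ block k ∧ z ∈ block k := by
    obtain ⟨k, hk⟩ := hres.exists_mem_block y hy
    exact ⟨k, hk, (hsome z k).1 (hyz ▸ (hsome y k).2 hk)⟩
  refine ⟨index, coord, share, hnone, fun y => ⟨?_, fun hy => hy ▸ hcoord_id⟩, ?_, ?_, ?_, ?_⟩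
  · contrapose!
    intro hy
    obtain ⟨k, hk⟩ := hres.exists_mem_block y hy
    exact (hcoord k).mapsTo hk
  · intro y z hy hyz hidx
    obtain ⟨k, hyk, hzk⟩ := exists_block hy hidx
    have heq := hres.loopTriple_eq_block h hyk hzk hyz
    rw [(hsome y k).2 hyk, hsome, ← heq]
    simp [loopTriple]
  · intro y z hy hyz hidx
    obtain ⟨k, hyk, hzk⟩ := exists_block hy hidx
    have heq := hres.loopTriple_eq_block h hyk hzk hyz
    have hz : z ≠ e := ne_of_mem_of_not_mem hzk (hres.id_notMem_block h k)
    exact h.label_op (heq ▸ hcoord k) hy hz hyz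
  · intro k u hu
    obtain ⟨z, hz, hzu⟩ := (hcoord k).surjOn hu
    exact ⟨z, (hsome z k).2 hz, hzu⟩
  · rintro y k hy hk ⟨l, m⟩
    obtain ⟨z, hz, hyz, hT⟩ := hres.exists_mem_cls y hy k l
    have hblock : loopTriple op y z ∉ Set.range block := by
      rintro ⟨k', hk'⟩
      obtain rfl := hres.eq_of_block_mem k' k l (hk' ▸ hT)
      exact hk ((hsome y k').2 (hk' ▸ by simp [loopTriple]))
    refine ⟨z, hz, fun hidx => ?_, hshare _ hblock k l m hT⟩
    obtain ⟨k', hyk, hzk⟩ := exists_block hy hidx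
    exact hblock ⟨k', (hres.loopTriple_eq_block h hyk hzk hyz).symm⟩

end IsStarResolution_s13

theorem IsStarResolution_s13.exists_isKirkmanColouring_prod {α K ι κ : Type*} [DecidableEq α]
    [Field K] [IsAddKleinFour K] [Finite ι] {op : α → α → α} {e : α} {block : ι → Finset α}
    {cls : ι → κ → Set (Finset α)} (h : IsSteinerLoop op e)
    (hres : IsStarResolution_s13 op e block cls) (hκ : Nat.card κ = 3) :
    ∃ col : α × K → α × K → Option (ι × κ × Fin 2),
      IsKirkmanColouring (fun p q => (op p.1 q.1, p.2 + q.2)) (e, 0) col := by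
  have : Finite κ := Nat.finite_of_card_ne_zero (by rw [hκ]; norm_num)
  obtain ⟨index, coord, share, hfr⟩ := hres.exists_isStarFrame (K := K) h
  obtain ⟨pack, hpack, hpack_none⟩ := exists_packing (K := K) (κ := κ × Fin 2) (by simp [hκ])
  obtain ⟨label, hlabel⟩ := exists_bijOn_compl_zero_of_card_eq_three (K := K) (α := α)
  exact ⟨_, hfr.isKirkmanColouring_gluedColour h hpack hpack_none hlabel⟩

section StarMultiset

variable {β ι κ : Type*} [DecidableEq β] [Fintype ι] [Fintype κ] {D P' : Finset β}
  {P : ι → κ → Finset β} {T : β}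

theorem card_filter_mem_eq_count_sum (P : ι → κ → Finset β) (T : β) :
    #{kl : ι × κ | T ∈ P kl.1 kl.2} = (∑ k, ∑ l, (P k l).val).count T := by
  simp only [card_filter, Fintype.sum_prod_type, Multiset.count_sum',
    Multiset.count_eq_of_nodup (nodup _), mem_val]

theorem card_filter_mem_of_sum_eq
    (hsum : ∑ k, ∑ l, (P k l).val = Fintype.card κ • P'.val + 2 • (D \ P').val) (T : β) :
    #{kl : ι × κ | T ∈ P kl.1 kl.2} =
      if T ∈ P' then Fintype.card κ else if T ∈ D then 2 else 0 := by
  rw [card_filter_mem_eq_count_sum, hsum]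
  simp only [Multiset.count_add, Multiset.count_nsmul, Multiset.count_eq_of_nodup (nodup _),
    mem_val, mem_sdiff]
  split_ifs <;> simp_all

theorem mem_of_sum_eq
    (hsum : ∑ k, ∑ l, (P k l).val = Fintype.card κ • P'.val + 2 • (D \ P').val) (hP' : P' ⊆ D)
    {k : ι} {l : κ} (hT : T ∈ P k l) : T ∈ D := by
  have hpos : 0 < #{kl : ι × κ | T ∈ P kl.1 kl.2} := card_pos.2 ⟨(k, l), by simpa using hT⟩
  rw [card_filter_mem_of_sum_eq hsum] at hpos
  split_ifs at hpos with hT' hTD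
  exacts [hP' hT', hTD, absurd hpos (lt_irrefl 0)]

/-- The classes `P k l` with `k` fixed already account for every occurrence of `T`. -/
theorem eq_of_mem_of_sum_eq
    (hsum : ∑ k, ∑ l, (P k l).val = Fintype.card κ • P'.val + 2 • (D \ P').val) (hT : T ∈ P')
    {k : ι} (hk : ∀ l, T ∈ P k l) {k' : ι} {l' : κ} (hk' : T ∈ P k' l') : k = k' := by
  classical
  have hall : (univ : Finset κ).map (Function.Embedding.sectR k κ) =
      ({kl | T ∈ P kl.1 kl.2} : Finset (ι × κ)) := by
    refine eq_of_subset_of_card_le (fun kl hkl => ?_) ?_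
    · obtain ⟨l, -, rfl⟩ := mem_map.1 hkl
      simpa using hk l
    · rw [card_filter_mem_of_sum_eq hsum, if_pos hT, card_map, card_univ]
  have hmem : (k', l') ∈ ({kl | T ∈ P kl.1 kl.2} : Finset (ι × κ)) := by simpa using hk'
  rw [← hall] at hmem
  obtain ⟨l, -, hl⟩ := mem_map.1 hmem
  exact congrArg Prod.fst hl

end StarMultiset

theorem IsSteinerLoop.exists_loopTriple_map_mem {α : Type*} [Fintype α] [DecidableEq α]
    {op : α → α → α} {e y : α} {f : α ↪ ℕ} {Q : Finset (Finset ℕ)} (h : IsSteinerLoop op e)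
    (hQ : IsParallelClass ((univ.erase e).map f) Q) (hsub : Q ⊆ loopBlocks op e f) (hy : y ≠ e) :
    ∃ z, z ≠ e ∧ y ≠ z ∧ (loopTriple op y z).map f ∈ Q := by
  obtain ⟨S, ⟨hS, hyS⟩, -⟩ := hQ.2 (f y) (by simpa using hy)
  obtain ⟨a, b, ha, hb, hab, rfl⟩ := mem_loopBlocks.1 (hsub hS)
  obtain ⟨z, hz, hyz, heq⟩ := h.exists_loopTriple_eq ha hb hab ((mem_map' f).1 hyS)
  exact ⟨z, hz, hyz, heq ▸ hS⟩

theorem IsRDSQSstar.exists_isStarResolution {α : Type*} [Fintype α] [DecidableEq α] {v : ℕ}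
    {X : Finset ℕ} {q : α → α → α → α} {f : α ↪ ℕ} (hq : IsSteinerSkein q)
    (hstar : IsRDSQSstar v X (skeinBlocks q f)) (hX : univ.map f = X) (p : α) :
    ∃ (block : Fin ((v - 1) / 3) → Finset α) (cls : Fin ((v - 1) / 3) → Fin 3 → Set (Finset α)),
      IsStarResolution_s13 (q p) p block cls := by
  subst hX
  obtain ⟨P', Bk, P, hP', hpar', hBk_mem, hBk_surj, hBk_inj, hpar, hsum, hBk⟩ :=
    hstar.2.2 (f p) (mem_map_of_mem f (mem_univ p))
  rw [hq.derivedBlocks_skeinBlocks] at hP' hsum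
  rw [← map_erase] at hpar' hpar
  have hsub (k l) : P k l ⊆ loopBlocks (q p) p f := fun T hT => mem_of_sum_eq hsum hP' hT
  have exists_triple (k) : ∃ T : Finset α, T.map f = Bk k ∧
      ∃ a b, a ≠ p ∧ b ≠ p ∧ a ≠ b ∧ loopTriple (q p) a b = T := by
    obtain ⟨a, b, ha, hb, hab, heq⟩ := mem_loopBlocks.1 (hP' (hBk_mem k))
    exact ⟨_, heq, a, b, ha, hb, hab, rfl⟩
  choose block hblock exists_eq_block using exists_triple
  refine ⟨block, fun k l => {T | T.map f ∈ P k l}, exists_eq_block, ?_, ?_, ?_, ?_, ?_⟩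
  · intro y hy
    obtain ⟨z, -, -, hT⟩ := (hq.loop p).exists_loopTriple_map_mem hpar' hP' hy
    obtain ⟨k, hk⟩ := hBk_surj _ hT
    have heq : block k = loopTriple (q p) y z := map_injective f ((hblock k).trans hk)
    exact ⟨k, heq ▸ by simp [loopTriple]⟩
  · intro y k k' hk hk'
    have mem_Bk {k} (hk : y ∈ block k) : f y ∈ Bk k := hblock k ▸ mem_map_of_mem f hk
    exact hBk_inj ((hpar'.2 (f y) (hpar'.1 _ (hBk_mem k) (mem_Bk hk))).unique
      ⟨hBk_mem k, mem_Bk hk⟩ ⟨hBk_mem k', mem_Bk hk'⟩)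
  · exact fun y hy k l => (hq.loop p).exists_loopTriple_map_mem (hpar k l) (hsub k l) hy
  · intro k' k l hk
    rw [Set.mem_ofPred_eq, hblock] at hk
    exact eq_of_mem_of_sum_eq hsum (hBk_mem k') (hBk k') hk
  · intro T hT
    have hT' : T.map f ∉ P' := fun hT' => by
      obtain ⟨k, hk⟩ := hBk_surj _ hT'
      exact hT ⟨k, map_injective f ((hblock k).trans hk)⟩
    have hcount := card_filter_mem_of_sum_eq hsum (T.map f)
    rw [if_neg hT'] at hcount
    simp only [Set.mem_ofPred_eq, Set.ncard_eq_toFinset_card', Set.toFinset_ofPred, hcount]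
    split_ifs <;> norm_num

theorem isAddKleinFour_of_charP_two {K : Type*} [Ring K] [CharP K 2] (hK : Nat.card K = 4) :
    IsAddKleinFour K where
  card_four := hK
  exponent_two := by
    have : Nontrivial K := CharP.nontrivial_of_char_ne_one (R := K) (show 2 ≠ 1 by norm_num)
    refine (AddMonoid.exponent_eq_prime_iff Nat.prime_two).2 fun a ha => ?_
    exact addOrderOf_eq_prime (by rw [two_nsmul, CharTwo.add_self_eq_zero]) ha

/-- Translating the second coordinate by `i` carries the point `(x, i)` to `(x, 0)`. -/
theorem IsSteinerSkein.existsRDSQS_prod {α V ι : Type*} [AddCommGroup V] [Finite α] [Finite V]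
    [Finite ι] {q : α → α → α → α} (hq : IsSteinerSkein q) (hV : ∀ i : V, i + i = 0)
    (hcard : 2 * Nat.card ι + 2 = Nat.card α * Nat.card V)
    (hcol : ∀ x, ∃ col : α × V → α × V → ι,
      IsKirkmanColouring (fun p r => (q x p.1 r.1, p.2 + r.2)) (x, 0) col) :
    ExistsRDSQS (Nat.card α * Nat.card V) := by
  rw [← Nat.card_prod] at hcard ⊢
  refine (hq.prod (.of_add_self_eq_zero hV)).existsRDSQS (ι := ι) hcard fun p => ?_
  obtain ⟨col, hcol⟩ := hcol p.1
  refine ⟨_, hcol.comp ((Equiv.refl α).prodCongr (Equiv.addLeft p.2)) (fun a b => ?_) ?_⟩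
  · refine Prod.ext rfl ?_
    change p.2 + (p.2 + a.2 + b.2) = p.2 + a.2 + (p.2 + b.2)
    abel
  · exact Prod.ext rfl (hV p.2)

/-- If there is an RDSQS*(v), then there is an RDSQS(4v). -/
theorem stmt_13 (v : ℕ) (h : ∃ X B, IsRDSQSstar v X B) :
    ExistsRDSQS (4 * v) := by
  obtain ⟨X, B, hstar⟩ := h
  obtain ⟨⟨hX, -⟩, hv, -⟩ := id hstar
  obtain ⟨q, hq, rfl⟩ := exists_isSteinerSkein hstar.1
  let K := GaloisField 2 2
  have hK : Nat.card K = 4 := GaloisField.card 2 2 two_ne_zero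
  have : IsAddKleinFour K := isAddKleinFour_of_charP_two hK
  have : Finite K := IsAddKleinFour.instFinite
  have hXK : 4 * v = Nat.card X * Nat.card K := by
    rw [hK, Nat.card_eq_fintype_card, Fintype.card_coe, hX, mul_comm]
  rw [hXK]
  refine hq.existsRDSQS_prod (ι := Option (Fin ((v - 1) / 3) × Fin 3 × Fin 2))
    IsAddKleinFour.add_self ?_ fun x => ?_
  · rw [← hXK]
    simp only [Finite.card_option, Nat.card_prod, Nat.card_fin]
    omega
  · obtain ⟨block, cls, hres⟩ := hstar.exists_isStarResolution hq X.attach_map_val x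
    exact hres.exists_isKirkmanColouring_prod (hq.loop x) (Nat.card_fin 3)
end
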